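/- arXiv:2408.03051 — 6 statements merged into one kernel-verified Lean document; each statement's English description precedes it below -/
import Mathlib

section
/- Let $\alpha_1,\alpha_2>0$ and $H\in(0,2)$ with $H\neq 1$. Then for every $N\in\mathbb{N}$, as $s\to+\infty$, $r_{12}(s)=\frac{\nu_1\nu_2(\rho-\eta)}{2(\alpha_1+\alpha_2)}\sum_{n=0}^{N}\Big(\frac{(-1)^n}{\alpha_2^{\,n+1}}+\frac{1}{\alpha_1^{\,n+1}}\Big)\Big(\prod_{k=0}^{n+1}(H-k)\Big)s^{H-2-n}+O\big(s^{H-N-3}\big)$. -/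
open MeasureTheory Filter Asymptotics Topology Real

/-!
Write `L f` for the function `v ↦ ∫ u ≤ 0, exp (α₁ u) f (v - u)`. The cross-covariance solves the
relaxation equation `r' = -α₂ r + c L p₀`, where `p₀` is the second derivative of `s ↦ s ^ H`.
Integrating by parts, `α₁ L f = f + L f'`, so with `pₙ` the successive derivatives of `p₀`,
`L p₀ = ∑ n < N, pₙ / α₁ ^ (n + 1) + L p_N / α₁ ^ N`. For this forcing the equation is solved, up to
a multiple of `p_N`, by a linear combination of the `pₙ` whose coefficients telescope. The error
therefore solves the same equation with a forcing of order `p_N`, and relaxation preserves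
power-law bounds: the initial value only contributes an exponentially small term.
-/

section Relaxation

variable {F : Type*} [NormedAddCommGroup F] [NormedSpace ℝ F] {a c γ : ℝ} {K E : ℝ → F}

lemma hasDerivAt_exp_mul (a s : ℝ) : HasDerivAt (fun s ↦ exp (a * s)) (a * exp (a * s)) s := by
  simpa [mul_comm] using ((hasDerivAt_id s).const_mul a).exp

lemma norm_le_mul_of_hasDerivAt_neg_smul_add {g g' : ℝ → ℝ} {s₀ M T : ℝ}
    (hK : ∀ s ∈ Set.Icc s₀ T, HasDerivAt K (-a • K s + E s) s)
    (hg : ∀ s ∈ Set.Icc s₀ T, HasDerivAt g (g' s) s)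
    (hE : ∀ s ∈ Set.Icc s₀ T, ‖E s‖ ≤ M * (a * g s + g' s))
    (h₀ : ‖K s₀‖ ≤ M * g s₀) (hT : s₀ ≤ T) : ‖K T‖ ≤ M * g T := by
  have hK' : ∀ s ∈ Set.Icc s₀ T,
      HasDerivAt (fun s ↦ exp (a * s) • K s) (exp (a * s) • E s) s := fun s hs ↦
    ((hasDerivAt_exp_mul a s).smul (hK s hs)).congr_deriv (by module)
  have hg' : ∀ s ∈ Set.Icc s₀ T, HasDerivAt (fun s ↦ exp (a * s) * (M * g s))
      (exp (a * s) * (M * (a * g s + g' s))) s := fun s hs ↦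
    ((hasDerivAt_exp_mul a s).mul ((hg s hs).const_mul M)).congr_deriv (by ring)
  have norm_exp_smul (s : ℝ) (x : F) : ‖exp (a * s) • x‖ = exp (a * s) * ‖x‖ := by
    rw [norm_smul, norm_of_nonneg (exp_pos _).le]
  have h := image_norm_le_of_norm_deriv_right_le_deriv_boundary'
    (fun s hs ↦ (hK' s hs).continuousAt.continuousWithinAt)
    (fun s hs ↦ (hK' s (Set.Ico_subset_Icc_self hs)).hasDerivWithinAt)
    (by rw [norm_exp_smul]; gcongr)
    (fun s hs ↦ (hg' s hs).continuousAt.continuousWithinAt)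
    (fun s hs ↦ (hg' s (Set.Ico_subset_Icc_self hs)).hasDerivWithinAt)
    (fun s hs ↦ by rw [norm_exp_smul]; gcongr; exact hE s (Set.Ico_subset_Icc_self hs))
    (Set.right_mem_Icc.2 hT)
  rw [norm_exp_smul] at h
  exact le_of_mul_le_mul_left h (exp_pos _)

lemma isBigO_of_hasDerivAt_neg_smul_add {g g' : ℝ → ℝ} (hc : 0 < c)
    (hK : ∀ᶠ s in atTop, HasDerivAt K (-a • K s + E s) s)
    (hg : ∀ᶠ s in atTop, HasDerivAt g (g' s) s) (hpos : ∀ᶠ s in atTop, 0 < g s)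
    (hcg : ∀ᶠ s in atTop, c * g s ≤ a * g s + g' s) (hE : E =O[atTop] g) : K =O[atTop] g := by
  obtain ⟨B, hB₀, hB⟩ := hE.exists_nonneg
  obtain ⟨s₀, hs₀⟩ := eventually_atTop.1 ((hK.and hg).and ((hpos.and hcg).and hB.bound))
  have hg₀ : 0 < g s₀ := (hs₀ s₀ le_rfl).2.1.1
  set M : ℝ := B / c + ‖K s₀‖ / g s₀
  have hBM : B ≤ M * c := by
    rw [← div_le_iff₀ hc]
    exact le_add_of_nonneg_right (by positivity)
  refine .of_bound M ?_
  filter_upwards [eventually_ge_atTop s₀, hpos] with T hT hgT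
  rw [norm_of_nonneg hgT.le]
  refine norm_le_mul_of_hasDerivAt_neg_smul_add (fun s hs ↦ (hs₀ s hs.1).1.1)
    (fun s hs ↦ (hs₀ s hs.1).1.2) (fun s hs ↦ ?_) ?_ hT
  · obtain ⟨-, ⟨hgs, hcs⟩, hEs⟩ := hs₀ s hs.1
    calc ‖E s‖ ≤ B * g s := by rwa [norm_of_nonneg hgs.le] at hEs
      _ ≤ M * c * g s := by gcongr
      _ = M * (c * g s) := mul_assoc ..
      _ ≤ M * (a * g s + g' s) := by gcongr
  · rw [← div_le_iff₀ hg₀]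
    exact le_add_of_nonneg_left (by positivity)

lemma eventually_abs_mul_rpow_sub_one_le (γ : ℝ) (hc : 0 < c) :
    ∀ᶠ s : ℝ in atTop, |γ * s ^ (γ - 1)| ≤ c * s ^ γ := by
  filter_upwards [eventually_ge_atTop (|γ| / c), eventually_gt_atTop 0] with s hs hs₀
  rw [abs_mul, abs_rpow_of_nonneg hs₀.le, abs_of_pos hs₀, rpow_sub_one hs₀.ne', ← mul_div_assoc,
    div_le_iff₀ hs₀, mul_right_comm]
  gcongr
  rwa [div_le_iff₀' hc] at hs

lemma isBigO_rpow_of_hasDerivAt_neg_smul_add (ha : 0 < a)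
    (hK : ∀ᶠ s in atTop, HasDerivAt K (-a • K s + E s) s)
    (hE : E =O[atTop] fun s ↦ s ^ γ) : K =O[atTop] fun s ↦ s ^ γ := by
  refine isBigO_of_hasDerivAt_neg_smul_add (g' := fun s ↦ γ * s ^ (γ - 1)) (half_pos ha) hK
    ?_ ?_ ?_ hE
  · filter_upwards [eventually_gt_atTop 0] with s hs using hasDerivAt_rpow_const (.inl hs.ne')
  · filter_upwards [eventually_gt_atTop 0] with s hs using rpow_pos_of_pos hs γ
  · filter_upwards [eventually_abs_mul_rpow_sub_one_le γ (half_pos ha)] with s hs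
    linarith [neg_le_of_abs_le hs]

/-- Duhamel's formula: the solution of the relaxation equation `K' = -a K + g` with `K 0 = C`. -/
noncomputable def duhamel (a C : ℝ) (g : ℝ → ℝ) (s : ℝ) : ℝ :=
  exp (-a * s) * (C + ∫ v in (0 : ℝ)..s, exp (a * v) * g v)

lemma hasDerivAt_duhamel (a C : ℝ) {g : ℝ → ℝ} {s : ℝ} (hg : IntervalIntegrable g volume 0 s)
    (hmeas : StronglyMeasurableAtFilter (fun v ↦ exp (a * v) * g v) (𝓝 s))
    (hcont : ContinuousAt g s) :
    HasDerivAt (duhamel a C g) (-a * duhamel a C g s + g s) s := by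
  have hint : HasDerivAt (fun s ↦ ∫ v in (0 : ℝ)..s, exp (a * v) * g v) (exp (a * s) * g s) s :=
    intervalIntegral.integral_hasDerivAt_right (hg.continuousOn_mul (by fun_prop)) hmeas
      (.mul (by fun_prop) hcont)
  have hexp : exp (-a * s) * exp (a * s) = 1 := by simp [← exp_add]
  refine ((hasDerivAt_exp_mul (-a) s).mul (hint.const_add C)).congr_deriv ?_
  unfold duhamel
  linear_combination g s * hexp

end Relaxation

section LaplaceShift

variable {α c v : ℝ} {f g f' : ℝ → ℝ}

/-- The Laplace transform at `α` of the translate `x ↦ f (v + x)`, written in the variable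
`u = -x ≤ 0` that comes from the past of the stationary process. -/
noncomputable def laplaceShift (α : ℝ) (f : ℝ → ℝ) (v : ℝ) : ℝ :=
  ∫ u in Set.Iic (0 : ℝ), exp (α * u) * f (v - u)

lemma laplaceShift_const_mul (α c : ℝ) (f : ℝ → ℝ) (v : ℝ) :
    laplaceShift α (fun x ↦ c * f x) v = c * laplaceShift α f v := by
  simp only [laplaceShift, mul_left_comm, integral_const_mul]

lemma integrableOn_exp_mul_const_mul {S : Set ℝ} (c : ℝ)
    (hf : IntegrableOn (fun w ↦ exp (-α * w) * f w) S) :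
    IntegrableOn (fun w ↦ exp (-α * w) * (c * f w)) S := by
  unfold IntegrableOn at hf ⊢
  simpa only [mul_left_comm] using hf.const_mul c

lemma laplaceShift_eq_exp_mul_integral_Ioi (α : ℝ) (f : ℝ → ℝ) (v : ℝ) :
    laplaceShift α f v = exp (α * v) * ∫ w in Set.Ioi v, exp (-α * w) * f w := by
  have hreflect := (Measure.measurePreserving_sub_left volume v).setIntegral_preimage_emb
    (Homeomorph.subLeft v).measurableEmbedding (fun w ↦ exp (α * v) * (exp (-α * w) * f w))
    (Set.Ici v)
  rw [Set.preimage_const_sub_Ici, sub_self, integral_Ici_eq_integral_Ioi] at hreflect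
  rw [← integral_const_mul, ← hreflect, laplaceShift]
  refine integral_congr_ae (.of_forall fun u ↦ ?_)
  simp only [← mul_assoc, ← exp_add]
  ring_nf

lemma laplaceShift_mono (hf : IntegrableOn (fun w ↦ exp (-α * w) * f w) (Set.Ioi v))
    (hg : IntegrableOn (fun w ↦ exp (-α * w) * g w) (Set.Ioi v))
    (hfg : ∀ w ∈ Set.Ioi v, f w ≤ g w) : laplaceShift α f v ≤ laplaceShift α g v := by
  simp only [laplaceShift_eq_exp_mul_integral_Ioi]
  refine mul_le_mul_of_nonneg_left (setIntegral_mono_on hf hg measurableSet_Ioi fun w hw ↦ ?_)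
    (exp_pos _).le
  exact mul_le_mul_of_nonneg_left (hfg w hw) (exp_pos _).le

lemma laplaceShift_nonneg (hf : ∀ w ∈ Set.Ioi v, 0 ≤ f w) : 0 ≤ laplaceShift α f v := by
  rw [laplaceShift_eq_exp_mul_integral_Ioi]
  exact mul_nonneg (exp_pos _).le <| setIntegral_nonneg measurableSet_Ioi fun w hw ↦
    mul_nonneg (exp_pos _).le (hf w hw)

lemma mul_laplaceShift_eq_add (hderiv : ∀ w ∈ Set.Ici v, HasDerivAt f (f' w) w)
    (hf : IntegrableOn (fun w ↦ exp (-α * w) * f w) (Set.Ioi v))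
    (hf' : IntegrableOn (fun w ↦ exp (-α * w) * f' w) (Set.Ioi v)) :
    α * laplaceShift α f v = f v + laplaceShift α f' v := by
  have hprod : ∀ w ∈ Set.Ici v, HasDerivAt (fun w ↦ exp (-α * w) * f w)
      (-α * (exp (-α * w) * f w) + exp (-α * w) * f' w) w := fun w hw ↦
    ((hasDerivAt_exp_mul (-α) w).mul (hderiv w hw)).congr_deriv (by ring)
  have hint := (hf.const_mul (-α)).add hf'
  have hlim := tendsto_zero_of_hasDerivAt_of_integrableOn_Ioi
    (fun w hw ↦ hprod w (Set.Ioi_subset_Ici_self hw)) hint hf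
  have hparts := integral_Ioi_of_hasDerivAt_of_tendsto' hprod hint hlim
  rw [integral_add (hf.const_mul (-α)) hf', integral_const_mul] at hparts
  have hexp : exp (α * v) * exp (-α * v) = 1 := by simp [← exp_add]
  simp only [laplaceShift_eq_exp_mul_integral_Ioi]
  linear_combination f v * hexp - exp (α * v) * hparts

lemma sub_mul_laplaceShift_le (hderiv : ∀ w ∈ Set.Ici v, HasDerivAt f (f' w) w)
    (hf : IntegrableOn (fun w ↦ exp (-α * w) * f w) (Set.Ioi v))
    (hf' : IntegrableOn (fun w ↦ exp (-α * w) * f' w) (Set.Ioi v))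
    (hle : ∀ w ∈ Set.Ioi v, f' w ≤ c * f w) : (α - c) * laplaceShift α f v ≤ f v := by
  have hmono := laplaceShift_mono hf' (integrableOn_exp_mul_const_mul c hf) hle
  rw [laplaceShift_const_mul] at hmono
  linarith [mul_laplaceShift_eq_add hderiv hf hf']

lemma laplaceShift_eq_sum_add {p : ℕ → ℝ → ℝ} (hα : α ≠ 0)
    (hp : ∀ n, ∀ w ∈ Set.Ici v, HasDerivAt (p n) (p (n + 1) w) w)
    (hint : ∀ n, IntegrableOn (fun w ↦ exp (-α * w) * p n w) (Set.Ioi v)) (N : ℕ) :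
    laplaceShift α (p 0) v =
      ∑ n ∈ Finset.range N, p n v / α ^ (n + 1) + laplaceShift α (p N) v / α ^ N := by
  induction N with
  | zero => simp
  | succ N ih =>
    have hparts := mul_laplaceShift_eq_add (hp N) (hint N) (hint (N + 1))
    have hN : laplaceShift α (p N) v / α ^ N =
        p N v / α ^ (N + 1) + laplaceShift α (p (N + 1)) v / α ^ (N + 1) := by
      rw [← add_div, ← hparts, pow_succ', mul_div_mul_left _ _ hα]
    rw [ih, Finset.sum_range_succ, add_assoc, hN]

lemma continuousOn_laplaceShift
    (hf : IntegrableOn (fun w ↦ exp (-α * w) * f w) (Set.Ioi v)) :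
    ContinuousOn (laplaceShift α f) (Set.Ici v) := by
  refine ContinuousOn.congr (.mul (by fun_prop) hf.continuousOn_Ici_primitive_Ioi)
    fun s _ ↦ laplaceShift_eq_exp_mul_integral_Ioi α f s

-- `laplaceShift α f'` may blow up at `v`; integrating by parts moves the singularity to `f`.
lemma intervalIntegrable_laplaceShift_deriv {s : ℝ} (hvs : v ≤ s)
    (hderiv : ∀ w ∈ Set.Ioi v, HasDerivAt f (f' w) w)
    (hf : IntegrableOn (fun w ↦ exp (-α * w) * f w) (Set.Ioi v))
    (hf' : ∀ t ∈ Set.Ioi v, IntegrableOn (fun w ↦ exp (-α * w) * f' w) (Set.Ioi t)) :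
    IntervalIntegrable (laplaceShift α f') volume v s := by
  have hL : IntervalIntegrable (laplaceShift α f) volume v s :=
    ((continuousOn_laplaceShift hf).mono Set.Icc_subset_Ici_self).intervalIntegrable_of_Icc hvs
  have hweighted : IntervalIntegrable (fun w ↦ exp (-α * w) * f w) volume v s :=
    (intervalIntegrable_iff_integrableOn_Ioc_of_le hvs).2 (hf.mono_set Set.Ioc_subset_Ioi_self)
  have hfint : IntervalIntegrable f volume v s := by
    refine (hweighted.continuousOn_mul (g := fun w ↦ exp (α * w)) (by fun_prop)).congr fun w _ ↦ ?_
    simp only [← mul_assoc, ← exp_add, neg_mul, add_neg_cancel, exp_zero, one_mul]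
  refine ((hL.const_mul α).sub hfint).congr fun t ht ↦ ?_
  have ht : v < t := (Set.uIoc_of_le hvs ▸ ht).1
  have hparts := mul_laplaceShift_eq_add (fun w hw ↦ hderiv w (ht.trans_le hw))
    (hf.mono_set (Set.Ioi_subset_Ioi ht.le)) (hf' t ht)
  simp only [hparts, add_sub_cancel_left]

end LaplaceShift

section Expansion

lemma hasDerivAt_relaxation_sum {𝕜 : Type*} [NontriviallyNormedField 𝕜] {a b s : 𝕜}
    {p : ℕ → 𝕜 → 𝕜} (ha : a ≠ 0) (hb : b ≠ 0) (hp : ∀ n, HasDerivAt (p n) (p (n + 1) s) s)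
    (N : ℕ) :
    HasDerivAt
      (fun s ↦ ∑ n ∈ Finset.range N, ((-1) ^ n / b ^ (n + 1) + 1 / a ^ (n + 1)) * p n s)
      (-b * ∑ n ∈ Finset.range N, ((-1) ^ n / b ^ (n + 1) + 1 / a ^ (n + 1)) * p n s
        + ((a + b) * ∑ n ∈ Finset.range N, p n s / a ^ (n + 1)
          + (1 / a ^ N - (-1) ^ N / b ^ N) * p N s)) s := by
  induction N with
  | zero => simpa using hasDerivAt_const s (0 : 𝕜)
  | succ N ih =>
    simp only [Finset.sum_range_succ]
    refine (ih.add ((hp N).const_mul _)).congr_deriv ?_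
    field_simp
    ring

lemma isBigO_duhamel_laplaceShift_sub_sum {a b γ : ℝ} {p : ℕ → ℝ → ℝ} (ha : 0 < a) (hb : 0 < b)
    (hp : ∀ n, ∀ s ∈ Set.Ioi 0, HasDerivAt (p n) (p (n + 1) s) s)
    (hint : ∀ n, ∀ s ∈ Set.Ioi 0, IntegrableOn (fun w ↦ exp (-a * w) * p n w) (Set.Ioi s))
    (hzero : ∀ s ∈ Set.Ioi 0, IntervalIntegrable (laplaceShift a (p 0)) volume 0 s)
    (C c : ℝ) (N : ℕ) (hpN : p N =O[atTop] fun s ↦ s ^ γ)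
    (hLpN : laplaceShift a (p N) =O[atTop] fun s ↦ s ^ γ) :
    (fun s ↦ duhamel b C (fun v ↦ c * laplaceShift a (p 0) v) s - c / (a + b) *
        ∑ n ∈ Finset.range N, ((-1) ^ n / b ^ (n + 1) + 1 / a ^ (n + 1)) * p n s)
      =O[atTop] fun s ↦ s ^ γ := by
  have hcont : ContinuousOn (laplaceShift a (p 0)) (Set.Ioi 0) := fun s (hs : 0 < s) ↦
    ((continuousOn_laplaceShift (hint 0 (s / 2) (half_pos hs))).continuousAt
      (Ici_mem_nhds (half_lt_self hs))).continuousWithinAt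
  have hforcing : ContinuousOn (fun v ↦ c * laplaceShift a (p 0) v) (Set.Ioi 0) :=
    hcont.const_mul c
  refine isBigO_rpow_of_hasDerivAt_neg_smul_add (E := fun s ↦
    c / a ^ N * laplaceShift a (p N) s - c / (a + b) * (1 / a ^ N - (-1) ^ N / b ^ N) * p N s)
    hb ?_ ((hLpN.const_mul_left _).sub (hpN.const_mul_left _))
  filter_upwards [eventually_gt_atTop 0] with s hs
  have hduhamel := hasDerivAt_duhamel b C ((hzero s hs).const_mul c)
    ((ContinuousOn.mul (by fun_prop) hforcing).stronglyMeasurableAtFilter isOpen_Ioi s hs)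
    (hforcing.continuousAt (Ioi_mem_nhds hs))
  have hsum := (hasDerivAt_relaxation_sum ha.ne' hb.ne' (hp · s hs) N).const_mul (c / (a + b))
  refine (hduhamel.sub hsum).congr_deriv ?_
  rw [laplaceShift_eq_sum_add ha.ne' (fun n w hw ↦ hp n w (hs.trans_le hw)) (hint · s hs) N]
  have hab : a + b ≠ 0 := by positivity
  simp only [smul_eq_mul]
  field_simp
  ring

end Expansion

section Power

variable {α H : ℝ}

/-- The `n`-th derivative of the power function `s ↦ s ^ H` on `s > 0`. -/
noncomputable def rpowDeriv (H : ℝ) (n : ℕ) (s : ℝ) : ℝ :=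
  (∏ k ∈ Finset.range n, (H - k)) * s ^ (H - n)

lemma rpowDeriv_two (H : ℝ) : rpowDeriv H 2 = fun s ↦ H * (H - 1) * s ^ (H - 2) := by
  ext s
  simp [rpowDeriv, Finset.prod_range_succ]

lemma rpowDeriv_add_two (H : ℝ) (n : ℕ) (s : ℝ) :
    rpowDeriv H (n + 2) s = (∏ k ∈ Finset.range (n + 2), (H - k)) * s ^ (H - 2 - n) := by
  rw [rpowDeriv]
  push_cast
  ring_nf

lemma hasDerivAt_rpowDeriv (H : ℝ) (n : ℕ) {s : ℝ} (hs : s ≠ 0) :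
    HasDerivAt (rpowDeriv H n) (rpowDeriv H (n + 1) s) s := by
  refine ((hasDerivAt_rpow_const (.inl hs)).const_mul _).congr_deriv ?_
  rw [rpowDeriv, Finset.prod_range_succ]
  push_cast
  ring_nf

lemma integrableOn_exp_neg_mul_rpow_Ioi (hα : 0 < α) (β : ℝ) {v : ℝ} (hv : 0 < v) :
    IntegrableOn (fun w ↦ exp (-α * w) * w ^ β) (Set.Ioi v) := by
  refine integrable_of_isBigO_exp_neg (half_pos hα) (fun w hw ↦ ContinuousAt.continuousWithinAt <|
    .mul (by fun_prop) (continuousAt_rpow_const w β (.inl (hv.trans_le hw).ne'))) ?_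
  refine ((isBigO_refl _ _).mul (isLittleO_rpow_exp_pos_mul_atTop β (half_pos hα)).isBigO).trans
    (EventuallyEq.isBigO <| .of_forall fun w ↦ ?_)
  simp only [← exp_add]
  ring_nf

lemma integrableOn_exp_neg_mul_rpowDeriv_Ioi (hα : 0 < α) (H : ℝ) (n : ℕ) {v : ℝ} (hv : 0 < v) :
    IntegrableOn (fun w ↦ exp (-α * w) * rpowDeriv H n w) (Set.Ioi v) :=
  integrableOn_exp_mul_const_mul _ (integrableOn_exp_neg_mul_rpow_Ioi hα (H - n) hv)

lemma isBigO_laplaceShift_rpow (hα : 0 < α) (β : ℝ) :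
    laplaceShift α (· ^ β) =O[atTop] fun s ↦ s ^ β := by
  obtain ⟨s₀, hs₀⟩ := eventually_atTop.1 (eventually_abs_mul_rpow_sub_one_le β (half_pos hα))
  refine .of_bound (2 / α) ?_
  filter_upwards [eventually_ge_atTop s₀, eventually_gt_atTop 0] with s hs hs_pos
  have hnonneg : 0 ≤ laplaceShift α (· ^ β) s :=
    laplaceShift_nonneg fun w hw ↦ rpow_nonneg (hs_pos.trans hw).le β
  have hle := sub_mul_laplaceShift_le (c := α / 2)
    (fun w hw ↦ hasDerivAt_rpow_const (.inl (hs_pos.trans_le hw).ne'))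
    (integrableOn_exp_neg_mul_rpow_Ioi hα β hs_pos)
    (integrableOn_exp_mul_const_mul β (integrableOn_exp_neg_mul_rpow_Ioi hα (β - 1) hs_pos))
    fun w hw ↦ le_of_abs_le (hs₀ w (hs.trans hw.le))
  rw [norm_of_nonneg hnonneg, norm_of_nonneg (rpow_nonneg hs_pos.le β), div_mul_eq_mul_div,
    le_div_iff₀ hα]
  linarith

lemma isBigO_laplaceShift_rpowDeriv (hα : 0 < α) (H : ℝ) (n : ℕ) :
    laplaceShift α (rpowDeriv H n) =O[atTop] fun s ↦ s ^ (H - n) :=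
  ((isBigO_laplaceShift_rpow hα (H - n)).const_mul_left _).congr_left fun v ↦
    (laplaceShift_const_mul α _ _ v).symm

lemma intervalIntegrable_laplaceShift_rpowDeriv_succ (hα : 0 < α) {n : ℕ} (hn : -1 < H - n)
    {s : ℝ} (hs : 0 ≤ s) :
    IntervalIntegrable (laplaceShift α (rpowDeriv H (n + 1))) volume 0 s := by
  have hint : IntegrableOn (fun w ↦ exp (-α * w) * w ^ (H - n)) (Set.Ioi 0) := by
    simpa only [rpow_one, mul_comm] using integrableOn_rpow_mul_exp_neg_mul_rpow hn one_pos hα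
  exact intervalIntegrable_laplaceShift_deriv hs
    (fun w hw ↦ hasDerivAt_rpowDeriv H n (Set.mem_Ioi.1 hw).ne')
    (integrableOn_exp_mul_const_mul _ hint)
    fun t ht ↦ integrableOn_exp_neg_mul_rpowDeriv_Ioi hα H (n + 1) ht

end Power

theorem stmt0_general {α1 α2 H : ℝ} (hα1 : 0 < α1) (hα2 : 0 < α2) (hH : 0 < H) (C c : ℝ) (N : ℕ) :
    (fun s : ℝ ↦ exp (-α2 * s) * (C + c * (H * (H - 1)) * ∫ v in (0 : ℝ)..s, exp (α2 * v) *
        ∫ u in Set.Iic (0 : ℝ), exp (α1 * u) * (v - u) ^ (H - 2)) -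
      c / (α1 + α2) * ∑ n ∈ Finset.range (N + 1),
        ((-1 : ℝ) ^ n / α2 ^ (n + 1) + 1 / α1 ^ (n + 1)) *
          (∏ k ∈ Finset.range (n + 2), (H - (k : ℝ))) * s ^ (H - 2 - (n : ℝ)))
      =O[atTop] fun s : ℝ ↦ s ^ (H - (N : ℝ) - 3) := by
  have hexp : H - ((N + 1 + 2 : ℕ) : ℝ) = H - N - 3 := by push_cast; ring
  have hforcing (s : ℝ) :
      ∫ v in (0 : ℝ)..s, exp (α2 * v) * (c * laplaceShift α1 (rpowDeriv H 2) v) =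
        c * (H * (H - 1)) * ∫ v in (0 : ℝ)..s, exp (α2 * v) *
          ∫ u in Set.Iic (0 : ℝ), exp (α1 * u) * (v - u) ^ (H - 2) := by
    rw [← intervalIntegral.integral_const_mul]
    refine intervalIntegral.integral_congr fun v _ ↦ ?_
    simp only [rpowDeriv_two, laplaceShift_const_mul]
    rw [laplaceShift]
    ring
  have key := isBigO_duhamel_laplaceShift_sub_sum hα1 hα2 (p := fun n ↦ rpowDeriv H (n + 2))
    (γ := H - N - 3) (fun n s hs ↦ hasDerivAt_rpowDeriv H (n + 2) (Set.mem_Ioi.1 hs).ne')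
    (fun n s hs ↦ integrableOn_exp_neg_mul_rpowDeriv_Ioi hα1 H (n + 2) hs)
    (fun s hs ↦ intervalIntegrable_laplaceShift_rpowDeriv_succ (n := 1) hα1
      (by push_cast; linarith) (Set.mem_Ioi.1 hs).le)
    C c (N + 1) (hexp ▸ (isBigO_refl _ _).const_mul_left _)
    (hexp ▸ isBigO_laplaceShift_rpowDeriv hα1 H (N + 1 + 2))
  refine key.congr_left fun s ↦ ?_
  simp only [duhamel, zero_add, hforcing, rpowDeriv_add_two, mul_assoc]

/-- Long-time asymptotic expansion of the lagged cross-covariance `r₁₂` of the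
bivariate fractional Ornstein–Uhlenbeck process, for `H = H₁ + H₂ ≠ 1`. -/
theorem stmt0
    (α1 α2 ν1 ν2 H ρ η : ℝ)
    (hα1 : 0 < α1) (hα2 : 0 < α2) (hν1 : 0 < ν1) (hν2 : 0 < ν2)
    (hH : H ∈ Set.Ioo (0:ℝ) 2) (hH1 : H ≠ 1)
    (C0 : ℝ)
    (hC0 : C0 = Real.Gamma (H + 1) * ν1 * ν2 / (2 * (α1 + α2)) *
      ((α1 ^ (1 - H) + α2 ^ (1 - H)) * ρ + (α2 ^ (1 - H) - α1 ^ (1 - H)) * η))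
    (I12 : ℝ → ℝ)
    (hI12 : ∀ s, I12 s =
      ∫ v in (0:ℝ)..s, Real.exp (α2 * v) *
        ∫ u in Set.Iic (0:ℝ), Real.exp (α1 * u) * (v - u) ^ (H - 2))
    (r12 : ℝ → ℝ)
    (hr12 : ∀ s, r12 s = Real.exp (-α2 * s) * C0 +
      ν1 * ν2 * Real.exp (-α2 * s) * (H * (H - 1)) * ((ρ - η) / 2) * I12 s)
    (N : ℕ) :
    (fun s : ℝ => r12 s -
      ν1 * ν2 * (ρ - η) / (2 * (α1 + α2)) *
        ∑ n ∈ Finset.range (N + 1),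
          ((-1 : ℝ) ^ n / α2 ^ (n + 1) + 1 / α1 ^ (n + 1)) *
            (∏ k ∈ Finset.range (n + 2), (H - (k : ℝ))) * s ^ (H - 2 - (n : ℝ)))
      =O[atTop] fun s : ℝ => s ^ (H - (N : ℝ) - 3) := by
  refine (stmt0_general hα1 hα2 hH.1 C0 (ν1 * ν2 * (ρ - η) / 2) N).congr_left fun s ↦ ?_
  rw [hr12, hI12, div_div, mul_add]
  ring
end

section
/- Let $\alpha_1,\alpha_2>0$ and $H\in(0,2)$ with $H\neq 1$. Define $A(s)=\int_0^s\int_{-\infty}^0 e^{\alpha_1 u+\alpha_2 v}\,(v-u)^{H-2}\,du\,dv$ for $s>0$. Then, as $s\to 0^+$, $A(s)=\frac{s^{H}}{H(1-H)}-\frac{\alpha_1^{1-H}\,\Gamma(H)}{1-H}\,s+\frac{H\alpha_2+\alpha_1}{H(1-H)(H+1)}\,s^{H+1}-\frac{(\alpha_1+\alpha_2)\,\alpha_1^{1-H}\,\Gamma(H)}{2(1-H)}\,s^{2}+o\big(s^{\max\{2,\,H+1\}}\big)$. -/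
open MeasureTheory Filter Asymptotics Topology Real

/-!
The substitution `w = v - u` turns the inner integral into `e^{(α₁+α₂)v} Γ(H-1; v)`, where
`Γ(p; v) = ∫_v^∞ w^{p-1} e^{-α₁w} dw`. Integrating by parts once raises the exponent to `H > 0`,
where the integral over `(0, v]` converges and the complete Gamma integral can be split off; this
gives `Γ(p; v) = α₁^{-p} Γ(p+1) / p - v^p / p + α₁ v^{p+1} / (p+1) + O(v^{p+2})` for `p = H - 1`.
Multiplying by the Taylor expansion of the exponential and integrating term by term yields the
expansion of `A` with remainder `O(s^{min(3, H+2)})`.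
-/

section PowersAtZero

theorem isLittleO_rpow_rpow_nhdsGT_zero {p q : ℝ} (h : p < q) :
    (fun x : ℝ => x ^ q) =o[𝓝[>] 0] fun x => x ^ p := by
  have tendsto_zero : Tendsto (fun x : ℝ => x ^ (q - p)) (𝓝[>] 0) (𝓝 0) := by
    have := (continuousAt_rpow_const 0 (q - p) (Or.inr (by linarith))).tendsto
    rw [zero_rpow (by linarith)] at this
    exact this.mono_left nhdsWithin_le_nhds
  refine isLittleO_of_tendsto' ?_ (tendsto_zero.congr' ?_)
  · filter_upwards [self_mem_nhdsWithin] with x (hx : 0 < x) hx0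
    exact absurd hx0 (rpow_pos_of_pos hx p).ne'
  · filter_upwards [self_mem_nhdsWithin] with x hx
    exact rpow_sub hx q p

theorem isBigO_rpow_rpow_nhdsGT_zero {p q : ℝ} (h : p ≤ q) :
    (fun x : ℝ => x ^ q) =O[𝓝[>] 0] fun x => x ^ p := by
  obtain rfl | hlt := h.eq_or_lt
  · exact isBigO_refl _ _
  · exact (isLittleO_rpow_rpow_nhdsGT_zero hlt).isBigO

theorem isBigO_mul_rpow_nhdsGT_zero {f g : ℝ → ℝ} {p q : ℝ}
    (hf : f =O[𝓝[>] 0] fun x => x ^ p) (hg : g =O[𝓝[>] 0] fun x => x ^ q) :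
    (fun x => f x * g x) =O[𝓝[>] 0] fun x => x ^ (p + q) := by
  refine (hf.mul hg).congr' EventuallyEq.rfl ?_
  filter_upwards [self_mem_nhdsWithin] with x hx
  exact (rpow_add hx p q).symm

theorem isBigO_exp_const_mul_sub_sum_range (c : ℝ) (n : ℕ) :
    (fun x : ℝ => exp (c * x) - ∑ i ∈ Finset.range n, (c * x) ^ i / i.factorial)
      =O[𝓝 0] fun x => x ^ n := by
  have tendsto_mul : Tendsto (fun x : ℝ => c * x) (𝓝 0) (𝓝 0) :=
    Continuous.tendsto' (by fun_prop) 0 0 (mul_zero c)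
  refine ((exp_sub_sum_range_isBigO_pow n).comp_tendsto tendsto_mul).trans ?_
  simp only [Function.comp_def, mul_pow]
  exact isBigO_const_mul_self _ _ _

theorem isBigO_intervalIntegral_rpow {E : Type*} [NormedAddCommGroup E] [NormedSpace ℝ E]
    {f : ℝ → E} {r : ℝ} (hr : -1 < r) (hf : f =O[𝓝[>] 0] fun v : ℝ => v ^ r) :
    (fun s : ℝ => ∫ v in (0 : ℝ)..s, f v) =O[𝓝[>] 0] fun s => s ^ (r + 1) := by
  obtain ⟨K, hK⟩ := hf.bound
  obtain ⟨δ, hδ : 0 < δ, hKδ⟩ := mem_nhdsGT_iff_exists_Ioo_subset.1 hK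
  refine IsBigO.of_bound (K / (r + 1)) ?_
  filter_upwards [Ioo_mem_nhdsGT hδ] with s ⟨hs, hsδ⟩
  have integral_bound : ∫ v in (0 : ℝ)..s, K * v ^ r = K / (r + 1) * ‖s ^ (r + 1)‖ := by
    rw [intervalIntegral.integral_const_mul, integral_rpow (Or.inl hr),
      zero_rpow (by linarith), norm_of_nonneg (rpow_nonneg hs.le _)]
    ring
  rw [← integral_bound]
  refine intervalIntegral.norm_integral_le_of_norm_le hs.le (ae_of_all _ fun v hv => ?_)
    ((intervalIntegral.intervalIntegrable_rpow' hr).const_mul K)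
  have norm_le : ‖f v‖ ≤ K * ‖v ^ r‖ := hKδ ⟨hv.1, hv.2.trans_lt hsδ⟩
  rwa [norm_of_nonneg (rpow_nonneg hv.1.le r)] at norm_le

end PowersAtZero

section IncompleteGamma

/-- The lower incomplete Gamma function with rate `a`, i.e. `a ^ (-p) * γ(p, a * x)` in classical
notation. Keeping the rate in the weight avoids rescaling the inner integral. -/
noncomputable def lowerIncompleteGamma (a p x : ℝ) : ℝ :=
  ∫ w in (0 : ℝ)..x, w ^ (p - 1) * exp (-a * w)

/-- The upper incomplete Gamma function with rate `a`, i.e. `a ^ (-p) * Γ(p, a * x)` in classical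
notation; for `x > 0` it converges for every real exponent `p`. -/
noncomputable def upperIncompleteGamma (a p x : ℝ) : ℝ :=
  ∫ w in Set.Ioi x, w ^ (p - 1) * exp (-a * w)

variable {a p x : ℝ}

theorem intervalIntegrable_rpow_mul_exp (a : ℝ) (hp : 0 < p) (x y : ℝ) :
    IntervalIntegrable (fun w : ℝ => w ^ (p - 1) * exp (-a * w)) volume x y :=
  (intervalIntegral.intervalIntegrable_rpow' (by linarith)).mul_continuousOn (by fun_prop)

theorem continuous_lowerIncompleteGamma (a : ℝ) (hp : 0 < p) :
    Continuous (lowerIncompleteGamma a p) :=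
  intervalIntegral.continuous_primitive (intervalIntegrable_rpow_mul_exp a hp) 0

theorem integrableOn_Ioi_rpow_mul_exp (ha : 0 < a) (p : ℝ) (hx : 0 < x) :
    IntegrableOn (fun w : ℝ => w ^ (p - 1) * exp (-a * w)) (Set.Ioi x) := by
  refine integrable_of_isBigO_exp_neg (half_pos ha) ?_ ?_
  · intro w hw
    have : w ≠ 0 := (hx.trans_le hw).ne'
    exact ContinuousAt.continuousWithinAt (by fun_prop (disch := simp [this]))
  · have := (isLittleO_rpow_exp_pos_mul_atTop (p - 1) (half_pos ha)).isBigO.mul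
      (isBigO_refl (fun w : ℝ => exp (-a * w)) atTop)
    refine this.congr_right fun w => ?_
    rw [← exp_add]
    ring_nf

theorem lowerIncompleteGamma_add_upperIncompleteGamma (ha : 0 < a) (hp : 0 < p) (hx : 0 < x) :
    lowerIncompleteGamma a p x + upperIncompleteGamma a p x = a ^ (-p) * Gamma p := by
  rw [lowerIncompleteGamma, upperIncompleteGamma,
    intervalIntegral.integral_interval_add_Ioi' (intervalIntegrable_rpow_mul_exp a hp 0 x)
      (integrableOn_Ioi_rpow_mul_exp ha p hx)]
  simp only [neg_mul]
  rw [integral_rpow_mul_exp_neg_mul_Ioi hp ha, one_div, inv_rpow ha.le, rpow_neg ha.le]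

theorem mul_upperIncompleteGamma (ha : 0 < a) (p : ℝ) (hx : 0 < x) :
    p * upperIncompleteGamma a p x =
      a * upperIncompleteGamma a (p + 1) x - x ^ p * exp (-a * x) := by
  have hasDerivAt_primitive : ∀ w ∈ Set.Ici x, HasDerivAt (fun w : ℝ => w ^ p * exp (-a * w))
      (p * (w ^ (p - 1) * exp (-a * w)) - a * (w ^ (p + 1 - 1) * exp (-a * w))) w := by
    intro w hw
    have rpow_deriv := hasDerivAt_rpow_const (p := p) (Or.inl (hx.trans_le hw).ne')
    refine (rpow_deriv.mul ((hasDerivAt_id w).const_mul (-a)).exp).congr_deriv ?_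
    rw [add_sub_cancel_right]
    simp only [id]
    ring
  have integrable_left := (integrableOn_Ioi_rpow_mul_exp ha p hx).const_mul p
  have integrable_right := (integrableOn_Ioi_rpow_mul_exp ha (p + 1) hx).const_mul a
  have fundamental := integral_Ioi_of_hasDerivAt_of_tendsto' hasDerivAt_primitive
    (integrable_left.sub integrable_right) (tendsto_rpow_mul_exp_neg_mul_atTop_nhds_zero p a ha)
  rw [integral_sub integrable_left integrable_right, integral_const_mul, integral_const_mul]
    at fundamental
  rw [upperIncompleteGamma, upperIncompleteGamma]
  linarith

theorem upperIncompleteGamma_eq (ha : 0 < a) (hp : -1 < p) (hp0 : p ≠ 0) (hx : 0 < x) :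
    upperIncompleteGamma a p x =
      (a ^ (-p) * Gamma (p + 1) - a * lowerIncompleteGamma a (p + 1) x - x ^ p * exp (-a * x))
        / p := by
  have complete := lowerIncompleteGamma_add_upperIncompleteGamma ha (p := p + 1) (by linarith) hx
  have rpow_neg_eq : a ^ (-p) = a * a ^ (-(p + 1)) := by
    rw [mul_comm, ← rpow_add_one ha.ne']
    ring_nf
  rw [eq_div_iff hp0, mul_comm, mul_upperIncompleteGamma ha p hx, rpow_neg_eq, mul_assoc,
    ← complete]
  ring

theorem intervalIntegrable_upperIncompleteGamma (ha : 0 < a) (hp : -1 < p) (hp0 : p ≠ 0)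
    (hx : 0 ≤ x) : IntervalIntegrable (upperIncompleteGamma a p) volume 0 x := by
  have continuous_lower := continuous_lowerIncompleteGamma a (p := p + 1) (by linarith)
  have integrable_power : IntervalIntegrable (fun v : ℝ => v ^ p * exp (-a * v)) volume 0 x :=
    (intervalIntegral.intervalIntegrable_rpow' hp).mul_continuousOn (by fun_prop)
  have integrable_regular : IntervalIntegrable
      (fun v => a ^ (-p) * Gamma (p + 1) - a * lowerIncompleteGamma a (p + 1) v) volume 0 x :=
    Continuous.intervalIntegrable (by fun_prop) 0 x
  refine ((integrable_regular.sub integrable_power).div_const p).congr fun v hv => ?_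
  rw [Set.uIoc_of_le hx] at hv
  exact (upperIncompleteGamma_eq ha hp hp0 hv.1).symm

theorem lowerIncompleteGamma_sub_isBigO (a : ℝ) (hp : 0 < p) :
    (fun x => lowerIncompleteGamma a p x - x ^ p / p) =O[𝓝[>] 0] fun x => x ^ (p + 1) := by
  have exp_sub_one : (fun w : ℝ => exp (-a * w) - 1) =O[𝓝[>] 0] fun w => w ^ (1 : ℝ) := by
    simpa using
      (isBigO_exp_const_mul_sub_sum_range (-a) 1).mono nhdsWithin_le_nhds
  have integrand_bound := isBigO_mul_rpow_nhdsGT_zero (isBigO_refl (fun w : ℝ => w ^ (p - 1)) _)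
    exp_sub_one
  rw [sub_add_cancel] at integrand_bound
  refine (isBigO_intervalIntegral_rpow (by linarith) integrand_bound).congr_left fun x => ?_
  have integral_power : ∫ w in (0 : ℝ)..x, w ^ (p - 1) = x ^ p / p := by
    rw [integral_rpow (Or.inl (by linarith)), sub_add_cancel, zero_rpow hp.ne', sub_zero]
  rw [lowerIncompleteGamma, ← integral_power, ← intervalIntegral.integral_sub
    (intervalIntegrable_rpow_mul_exp a hp 0 x)
    (intervalIntegral.intervalIntegrable_rpow' (by linarith))]
  simp only [mul_sub, mul_one]

theorem upperIncompleteGamma_sub_isBigO (ha : 0 < a) (hp : -1 < p) (hp0 : p ≠ 0) :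
    (fun x => upperIncompleteGamma a p x -
        (a ^ (-p) * Gamma (p + 1) / p - x ^ p / p + a / (p + 1) * x ^ (p + 1)))
      =O[𝓝[>] 0] fun x => x ^ (p + 2) := by
  have exp_taylor : (fun x : ℝ => exp (-a * x) - (1 - a * x)) =O[𝓝[>] 0] fun x => x ^ (2 : ℝ) := by
    simpa [Finset.sum_range_succ, sub_eq_add_neg] using
      (isBigO_exp_const_mul_sub_sum_range (-a) 2).mono nhdsWithin_le_nhds
  have power_term := isBigO_mul_rpow_nhdsGT_zero (isBigO_refl (fun x : ℝ => x ^ p) _) exp_taylor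
  have lower_term := lowerIncompleteGamma_sub_isBigO a (p := p + 1) (by linarith)
  rw [add_assoc, one_add_one_eq_two] at lower_term
  refine (((lower_term.const_mul_left a).add power_term).const_mul_left (-1 / p)).congr' ?_
    EventuallyEq.rfl
  filter_upwards [self_mem_nhdsWithin] with x (hx : 0 < x)
  have : p + 1 ≠ 0 := by linarith
  rw [upperIncompleteGamma_eq ha hp hp0 hx, rpow_add_one hx.ne']
  field_simp
  ring

theorem upperIncompleteGamma_isBigO (ha : 0 < a) (hp : -1 < p) (hp0 : p ≠ 0) :
    upperIncompleteGamma a p =O[𝓝[>] 0] fun x => x ^ min p 0 := by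
  have remainder := (upperIncompleteGamma_sub_isBigO ha hp hp0).trans
    (isBigO_rpow_rpow_nhdsGT_zero (p := min p 0) ((min_le_left p 0).trans (by linarith)))
  have constant_term : (fun _ : ℝ => a ^ (-p) * Gamma (p + 1) / p) =O[𝓝[>] 0]
      fun x => x ^ min p 0 := by
    have := isBigO_rpow_rpow_nhdsGT_zero (min_le_right p 0)
    simp only [rpow_zero] at this
    exact (isBigO_const_const _ one_ne_zero _).trans this
  have leading_term := (isBigO_rpow_rpow_nhdsGT_zero (min_le_left p 0)).const_mul_left (1 / p)
  have next_term := (isBigO_rpow_rpow_nhdsGT_zero (p := min p 0) (q := p + 1)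
    ((min_le_left p 0).trans (by linarith))).const_mul_left (a / (p + 1))
  refine (remainder.add ((constant_term.sub leading_term).add next_term)).congr_left fun x => ?_
  ring

end IncompleteGamma

section CrossCovariance

/-- The inner integral of the cross-covariance, as a function of the outer variable `v`. -/
noncomputable def innerIntegral (a b H v : ℝ) : ℝ :=
  ∫ u in Set.Iic (0 : ℝ), exp (a * u + b * v) * (v - u) ^ (H - 2)

/-- The expansion of `innerIntegral a b H v` as `v → 0⁺`, up to an error of order
`v ^ min 2 (H + 1)`. -/
noncomputable def innerExpansion (a b H v : ℝ) : ℝ :=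
  v ^ (H - 1) / (1 - H) - a ^ (1 - H) * Gamma H / (1 - H) * (1 + (a + b) * v) +
    (H * b + a) / (H * (1 - H)) * v ^ H

variable {a H : ℝ}

theorem innerIntegral_eq (a b H v : ℝ) :
    innerIntegral a b H v = exp ((a + b) * v) * upperIncompleteGamma a (H - 1) v := by
  have reflect := integral_comp_neg_Ioi 0
    fun u : ℝ => exp (a * u + b * v) * (v - u) ^ (H - 2)
  have translate := (measurePreserving_add_right volume v).setIntegral_preimage_emb
    (measurableEmbedding_addRight v)
    (fun w : ℝ => exp ((a + b) * v) * (w ^ (H - 1 - 1) * exp (-a * w))) (Set.Ioi v)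
  rw [Set.preimage_add_const_Ioi, sub_self] at translate
  rw [neg_zero] at reflect
  rw [innerIntegral, upperIncompleteGamma, ← integral_const_mul, ← reflect, ← translate]
  refine integral_congr_ae (ae_of_all _ fun x => ?_)
  have exponent : a * -x + b * v = (a + b) * v + -a * (x + v) := by ring
  have power : H - 1 - 1 = H - 2 := by ring
  simp only [exponent, power, exp_add, sub_neg_eq_add, add_comm v x]
  ring

theorem innerIntegral_sub_innerExpansion_isBigO (ha : 0 < a) (b : ℝ) (hH : 0 < H) (hH1 : H ≠ 1) :
    (fun v => innerIntegral a b H v - innerExpansion a b H v)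
      =O[𝓝[>] 0] fun v => v ^ min 2 (H + 1) := by
  have hp : -1 < H - 1 := by linarith
  have hp0 : H - 1 ≠ 0 := sub_ne_zero.2 hH1
  have exp_taylor : (fun v : ℝ => exp ((a + b) * v) - (1 + (a + b) * v)) =O[𝓝[>] 0]
      fun v => v ^ (2 : ℝ) := by
    simpa [Finset.sum_range_succ] using
      (isBigO_exp_const_mul_sub_sum_range (a + b) 2).mono nhdsWithin_le_nhds
  have exp_error := isBigO_mul_rpow_nhdsGT_zero exp_taylor (upperIncompleteGamma_isBigO ha hp hp0)
  rw [min_comm, ← min_add_add_left, add_zero, show 2 + (H - 1) = H + 1 by ring] at exp_error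
  have linear_bounded : (fun v : ℝ => 1 + (a + b) * v) =O[𝓝[>] 0] fun v => v ^ (0 : ℝ) := by
    simp only [rpow_zero]
    have : Continuous fun v : ℝ => 1 + (a + b) * v := by fun_prop
    exact (this.tendsto 0).isBigO_one ℝ |>.mono nhdsWithin_le_nhds
  have gamma_error := isBigO_mul_rpow_nhdsGT_zero linear_bounded
    (upperIncompleteGamma_sub_isBigO ha hp hp0)
  rw [show 0 + (H - 1 + 2) = H + 1 by ring] at gamma_error
  have cross_term := (isBigO_refl (fun v : ℝ => v ^ (H + 1)) (𝓝[>] 0)).const_mul_left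
    ((a + b) * a / H)
  have lower_order := isBigO_rpow_rpow_nhdsGT_zero (min_le_right 2 (H + 1))
  refine (exp_error.add ((gamma_error.add cross_term).trans lower_order)).congr' ?_
    EventuallyEq.rfl
  filter_upwards [self_mem_nhdsWithin] with v (hv : 0 < v)
  have h1H : 1 - H ≠ 0 := sub_ne_zero.2 hH1.symm
  have rpow_H : v ^ H = v ^ (H - 1) * v := by rw [← rpow_add_one hv.ne', sub_add_cancel]
  rw [innerIntegral_eq, innerExpansion, sub_add_cancel, neg_sub, rpow_add_one hv.ne', rpow_H,
    ← neg_sub 1 H]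
  field_simp
  ring

theorem intervalIntegrable_innerIntegral (ha : 0 < a) (b : ℝ) (hH : 0 < H) (hH1 : H ≠ 1) {s : ℝ}
    (hs : 0 ≤ s) : IntervalIntegrable (innerIntegral a b H) volume 0 s := by
  rw [funext (innerIntegral_eq a b H)]
  exact (intervalIntegrable_upperIncompleteGamma ha (by linarith) (sub_ne_zero.2 hH1)
    hs).continuousOn_mul (by fun_prop)

theorem intervalIntegrable_innerExpansion (a b : ℝ) (hH : 0 < H) (s : ℝ) :
    IntervalIntegrable (innerExpansion a b H) volume 0 s :=
  (((intervalIntegral.intervalIntegrable_rpow' (by linarith)).div_const _).sub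
    (Continuous.intervalIntegrable (by fun_prop) 0 s)).add
    ((intervalIntegral.intervalIntegrable_rpow' (by linarith)).const_mul _)

theorem integral_innerExpansion (a b : ℝ) (hH : 0 < H) (s : ℝ) :
    ∫ v in (0 : ℝ)..s, innerExpansion a b H v =
      s ^ H / (H * (1 - H)) - a ^ (1 - H) * Gamma H / (1 - H) * s +
        (H * b + a) / (H * (1 - H) * (H + 1)) * s ^ (H + 1) -
        (a + b) * a ^ (1 - H) * Gamma H / (2 * (1 - H)) * s ^ (2 : ℕ) := by
  have integrable_leading : IntervalIntegrable (fun v : ℝ => v ^ (H - 1) / (1 - H)) volume 0 s :=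
    (intervalIntegral.intervalIntegrable_rpow' (by linarith)).div_const _
  have integrable_linear : IntervalIntegrable
      (fun v => a ^ (1 - H) * Gamma H / (1 - H) * (1 + (a + b) * v)) volume 0 s :=
    Continuous.intervalIntegrable (by fun_prop) 0 s
  have integral_linear : ∫ v in (0 : ℝ)..s, (1 + (a + b) * v) = s + (a + b) * (s ^ 2 / 2) := by
    rw [intervalIntegral.integral_add intervalIntegrable_const
      (Continuous.intervalIntegrable (by fun_prop) 0 s), intervalIntegral.integral_const_mul,
      integral_id]
    simp
  simp only [innerExpansion]
  rw [intervalIntegral.integral_add (integrable_leading.sub integrable_linear)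
      ((intervalIntegral.intervalIntegrable_rpow' (by linarith)).const_mul _),
    intervalIntegral.integral_sub integrable_leading integrable_linear,
    intervalIntegral.integral_div, intervalIntegral.integral_const_mul,
    intervalIntegral.integral_const_mul, integral_linear, integral_rpow (Or.inl (by linarith)),
    integral_rpow (Or.inl (by linarith)), sub_add_cancel, zero_rpow hH.ne',
    zero_rpow (by linarith)]
  simp only [div_mul_eq_div_div]
  ring

end CrossCovariance

theorem stmt2_general {α1 H : ℝ} (hα1 : 0 < α1) (α2 : ℝ) (hH : 0 < H) (hH1 : H ≠ 1)
    {A : ℝ → ℝ}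
    (hA : ∀ s, A s = ∫ v in (0 : ℝ)..s,
        ∫ u in Set.Iic (0 : ℝ), exp (α1 * u + α2 * v) * (v - u) ^ (H - 2)) :
    (fun s : ℝ => A s -
        (s ^ H / (H * (1 - H)) - α1 ^ (1 - H) * Gamma H / (1 - H) * s +
          (H * α2 + α1) / (H * (1 - H) * (H + 1)) * s ^ (H + 1) -
          (α1 + α2) * α1 ^ (1 - H) * Gamma H / (2 * (1 - H)) * s ^ (2 : ℕ)))
      =O[𝓝[>] (0 : ℝ)] fun s : ℝ => s ^ min 3 (H + 2) := by
  have integral_bound := isBigO_intervalIntegral_rpow (lt_min (by norm_num) (by linarith))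
    (innerIntegral_sub_innerExpansion_isBigO hα1 α2 hH hH1)
  rw [← min_add_add_right, two_add_one_eq_three, add_assoc, one_add_one_eq_two] at integral_bound
  refine integral_bound.congr' ?_ EventuallyEq.rfl
  filter_upwards [self_mem_nhdsWithin] with s (hs : 0 < s)
  rw [intervalIntegral.integral_sub (intervalIntegrable_innerIntegral hα1 α2 hH hH1 hs.le)
    (intervalIntegrable_innerExpansion α1 α2 hH s), integral_innerExpansion α1 α2 hH s, hA]
  rfl

/-- Short-time expansion of the double integral appearing in the cross-covariance
of the bivariate fractional Ornstein–Uhlenbeck process, for `H ≠ 1`. -/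
theorem stmt2
    (α1 α2 H : ℝ) (hα1 : 0 < α1) (hα2 : 0 < α2)
    (hH : H ∈ Set.Ioo (0:ℝ) 2) (hH1 : H ≠ 1)
    (A : ℝ → ℝ)
    (hA : ∀ s, A s = ∫ v in (0:ℝ)..s,
        ∫ u in Set.Iic (0:ℝ), Real.exp (α1 * u + α2 * v) * (v - u) ^ (H - 2)) :
    (fun s : ℝ => A s -
        (s ^ H / (H * (1 - H)) - α1 ^ (1 - H) * Real.Gamma H / (1 - H) * s +
          (H * α2 + α1) / (H * (1 - H) * (H + 1)) * s ^ (H + 1) -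
          (α1 + α2) * α1 ^ (1 - H) * Real.Gamma H / (2 * (1 - H)) * s ^ (2 : ℕ)))
      =o[𝓝[>] (0:ℝ)] fun s : ℝ => s ^ max 2 (H + 1) :=
  (stmt2_general hα1 α2 hH.1 hH1 hA).trans_isLittleO
    (isLittleO_rpow_rpow_nhdsGT_zero (by grind))
end

section
/- Let $\alpha_1,\alpha_2>0$. Then, as $s\to 0^+$, $\int_0^s\int_{-\infty}^0 e^{\alpha_1 u+\alpha_2 v}\,(v-u)^{-1}\,du\,dv=-s\log s+O(s)$. -/
/-!
Compare the weight `e^{α₁u}` with its value `1` at `0`: since `(e^{α₁u} - 1) / u` is integrable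
near `0` and `|v - u| ≥ |u|`, replacing the weight by `1` on `(-1, 0]` and by `0` on `(-∞, -1]`
costs `O(1)`, uniformly in `v`. The inner integral is therefore
`∫_{-1}^0 (v - u)⁻¹ du + O(1) = -log v + O(1)`. The factor `e^{α₂v} = 1 + O(v)` does not disturb
this, because `v log v` is bounded, and integrating `-log v + O(1)` over `(0, s)` gives the claim.
-/

open MeasureTheory Filter Asymptotics Topology Real

section CauchyKernel

variable {h : ℝ → ℝ} {μ : Measure ℝ} {v : ℝ}

lemma abs_mul_inv_sub_le_abs_div {u : ℝ} (hu : u < 0) (hv : 0 ≤ v) (x : ℝ) :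
    |x * (v - u)⁻¹| ≤ |x / u| := by
  have hvu : |u| ≤ |v - u| := by
    rw [abs_of_neg hu, abs_of_pos (by linarith)]
    linarith
  rw [← div_eq_mul_inv, abs_div, abs_div]
  have : 0 < |u| := abs_pos.2 hu.ne
  gcongr

lemma integrable_mul_inv_sub (hμ : ∀ᵐ u ∂μ, u < 0) (hh : Integrable (fun u => h u / u) μ)
    (hv : 0 ≤ v) : Integrable (fun u => h u * (v - u)⁻¹) μ := by
  have hmeas : Measurable fun u : ℝ => u * (v - u)⁻¹ := by fun_prop
  have hbound : ∀ᵐ u ∂μ, ‖u * (v - u)⁻¹‖ ≤ 1 := by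
    filter_upwards [hμ] with u hu
    simpa [div_self hu.ne] using abs_mul_inv_sub_le_abs_div hu hv u
  refine (hh.mul_bdd hmeas.aestronglyMeasurable hbound).congr ?_
  filter_upwards [hμ] with u hu
  rw [← mul_assoc, div_mul_cancel₀ _ hu.ne]

lemma isBigO_integral_mul_inv_sub (hμ : ∀ᵐ u ∂μ, u < 0)
    (hh : Integrable (fun u => h u / u) μ) :
    (fun v => ∫ u, h u * (v - u)⁻¹ ∂μ) =O[𝓝[>] (0 : ℝ)] fun _ => (1 : ℝ) := by
  refine IsBigO.of_bound (∫ u, |h u / u| ∂μ) ?_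
  filter_upwards [self_mem_nhdsWithin] with v hv
  rw [norm_one, mul_one]
  refine norm_integral_le_of_norm_le hh.abs ?_
  filter_upwards [hμ] with u hu
  exact abs_mul_inv_sub_le_abs_div hu (le_of_lt hv) (h u)

lemma intervalIntegrable_inv_sub {a b : ℝ} (hav : a < v) (hbv : b < v) :
    IntervalIntegrable (fun u => (v - u)⁻¹) volume a b := by
  refine ContinuousOn.intervalIntegrable (ContinuousOn.inv₀ (by fun_prop) fun u hu => ?_)
  exact (sub_pos.2 (hu.2.trans_lt (max_lt hav hbv))).ne'

lemma integral_inv_sub {a b : ℝ} (hav : a < v) (hbv : b < v) :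
    ∫ u in a..b, (v - u)⁻¹ = log (v - a) - log (v - b) := by
  rw [intervalIntegral.integral_comp_sub_left (fun x => x⁻¹),
    integral_inv_of_pos (sub_pos.2 hbv) (sub_pos.2 hav),
    log_div (sub_pos.2 hav).ne' (sub_pos.2 hbv).ne']

end CauchyKernel

section LogarithmicSingularity

lemma ae_restrict_neg_of_subset_Iic {s : Set ℝ} (hs : s ⊆ Set.Iic 0) :
    ∀ᵐ u ∂volume.restrict s, u < 0 := by
  refine ae_restrict_of_ae_restrict_of_subset hs ?_
  rw [← restrict_Iio_eq_restrict_Iic]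
  exact ae_restrict_mem measurableSet_Iio

variable {f : ℝ → ℝ} {a : ℝ}

lemma integral_Iic_mul_inv_sub (ha : a < 0)
    (hfar : IntegrableOn (fun u => f u / u) (Set.Iic a))
    (hnear : IntegrableOn (fun u => (f u - f 0) / u) (Set.Ioc a 0)) {v : ℝ} (hv : 0 < v) :
    ∫ u in Set.Iic 0, f u * (v - u)⁻¹ =
      (∫ u in Set.Iic a, f u * (v - u)⁻¹) + (∫ u in Set.Ioc a 0, (f u - f 0) * (v - u)⁻¹) +
        f 0 * (log (v - a) - log v) := by
  have hint_far : IntegrableOn (fun u => f u * (v - u)⁻¹) (Set.Iic a) :=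
    integrable_mul_inv_sub (ae_restrict_neg_of_subset_Iic (Set.Iic_subset_Iic.2 ha.le)) hfar hv.le
  have hint_diff : IntegrableOn (fun u => (f u - f 0) * (v - u)⁻¹) (Set.Ioc a 0) :=
    integrable_mul_inv_sub (ae_restrict_neg_of_subset_Iic Set.Ioc_subset_Iic_self) hnear hv.le
  have hint_const : IntegrableOn (fun u => f 0 * (v - u)⁻¹) (Set.Ioc a 0) :=
    (intervalIntegrable_inv_sub (ha.trans hv) hv).1.const_mul (f 0)
  have hsplit : (fun u => f u * (v - u)⁻¹) =
      fun u => (f u - f 0) * (v - u)⁻¹ + f 0 * (v - u)⁻¹ := by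
    ext u
    ring
  have hint_near : IntegrableOn (fun u => f u * (v - u)⁻¹) (Set.Ioc a 0) := by
    rw [hsplit]
    exact hint_diff.add hint_const
  have hlog : ∫ u in Set.Ioc a 0, (v - u)⁻¹ = log (v - a) - log v := by
    rw [← intervalIntegral.integral_of_le ha.le, integral_inv_sub (ha.trans hv) hv, sub_zero]
  have hnear_eq : ∫ u in Set.Ioc a 0, f u * (v - u)⁻¹ =
      (∫ u in Set.Ioc a 0, (f u - f 0) * (v - u)⁻¹) + f 0 * (log (v - a) - log v) := by
    rw [hsplit, integral_add hint_diff hint_const, integral_const_mul, hlog]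
  rw [← Set.Iic_union_Ioc_eq_Iic ha.le, setIntegral_union (Set.Iic_disjoint_Ioc le_rfl)
    measurableSet_Ioc hint_far hint_near, hnear_eq, add_assoc]

theorem isBigO_integral_Iic_mul_inv_sub_add_log (ha : a < 0)
    (hfar : IntegrableOn (fun u => f u / u) (Set.Iic a))
    (hnear : IntegrableOn (fun u => (f u - f 0) / u) (Set.Ioc a 0)) :
    (fun v => (∫ u in Set.Iic 0, f u * (v - u)⁻¹) + f 0 * log v)
      =O[𝓝[>] (0 : ℝ)] fun _ => (1 : ℝ) := by
  have hO_far := isBigO_integral_mul_inv_sub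
    (ae_restrict_neg_of_subset_Iic (Set.Iic_subset_Iic.2 ha.le)) hfar
  have hO_near := isBigO_integral_mul_inv_sub
    (ae_restrict_neg_of_subset_Iic Set.Ioc_subset_Iic_self) hnear
  have hO_log : (fun v => f 0 * log (v - a)) =O[𝓝[>] (0 : ℝ)] fun _ => (1 : ℝ) := by
    have hcont : ContinuousAt (fun v => f 0 * log (v - a)) 0 := by
      have : (0 : ℝ) - a ≠ 0 := by linarith
      fun_prop (disch := assumption)
    exact (hcont.tendsto.isBigO_one ℝ).mono nhdsWithin_le_nhds
  refine ((hO_far.add hO_near).add hO_log).congr' ?_ EventuallyEq.rfl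
  filter_upwards [self_mem_nhdsWithin] with v hv
  rw [integral_Iic_mul_inv_sub ha hfar hnear hv]
  ring

end LogarithmicSingularity

lemma locallyIntegrable_slope {f : ℝ → ℝ} {x : ℝ} (hf : Continuous f)
    (hfx : DifferentiableAt ℝ f x) : LocallyIntegrable (slope f x) := by
  have hcont : Continuous (dslope f x) :=
    continuousOn_univ.1 ((continuousOn_dslope univ_mem).2 ⟨hf.continuousOn, hfx⟩)
  have hae : dslope f x =ᵐ[volume] slope f x := by
    filter_upwards [Measure.ae_ne volume x] with u hu using dslope_of_ne f hu
  exact hcont.locallyIntegrable.congr hae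

theorem isBigO_integral_exp_mul_inv_sub_add_log {a : ℝ} (ha : 0 < a) :
    (fun v => (∫ u in Set.Iic 0, exp (a * u) * (v - u)⁻¹) + log v)
      =O[𝓝[>] (0 : ℝ)] fun _ => (1 : ℝ) := by
  have hfar : IntegrableOn (fun u => exp (a * u) / u) (Set.Iic (-1)) := by
    refine (integrableOn_exp_mul_Iic ha (-1)).mul_bdd (c := 1)
      measurable_inv.aestronglyMeasurable ?_
    filter_upwards [ae_restrict_mem measurableSet_Iic] with u (hu : u ≤ -1)
    rw [norm_inv]
    exact inv_le_one_of_one_le₀ (le_abs.2 (Or.inr (by linarith)))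
  have hnear : IntegrableOn (fun u => (exp (a * u) - exp (a * 0)) / u) (Set.Ioc (-1) 0) := by
    have hslope : LocallyIntegrable (slope (fun u => exp (a * u)) 0) :=
      locallyIntegrable_slope (by fun_prop) (by fun_prop)
    simpa only [slope_fun_def_field, sub_zero] using
      (hslope.integrableOn_isCompact isCompact_Icc).mono_set Set.Ioc_subset_Icc_self
  simpa only [mul_zero, exp_zero, one_mul] using
    isBigO_integral_Iic_mul_inv_sub_add_log (f := fun u => exp (a * u)) (by norm_num) hfar hnear

lemma isBigO_mul_add_log {F g : ℝ → ℝ} {c : ℝ}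
    (hF : (fun v => F v + c * log v) =O[𝓝[>] (0 : ℝ)] fun _ => (1 : ℝ))
    (hg : DifferentiableAt ℝ g 0) :
    (fun v => g v * F v + g 0 * c * log v) =O[𝓝[>] (0 : ℝ)] fun _ => (1 : ℝ) := by
  have hg_one : g =O[𝓝[>] (0 : ℝ)] fun _ => (1 : ℝ) :=
    (hg.continuousAt.tendsto.isBigO_one ℝ).mono nhdsWithin_le_nhds
  have hg_sub : (fun v => g v - g 0) =O[𝓝[>] (0 : ℝ)] fun v => v := by
    simpa only [sub_zero] using hg.isBigO_sub.mono nhdsWithin_le_nhds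
  have hlog : (fun v : ℝ => v * log v) =O[𝓝[>] (0 : ℝ)] fun _ => (1 : ℝ) :=
    (continuous_mul_log.continuousAt.tendsto.isBigO_one ℝ).mono nhdsWithin_le_nhds
  have hO_main := hg_one.mul hF
  have hO_error := ((hg_sub.mul (isBigO_refl log _)).trans hlog).const_mul_left c
  simp only [mul_one] at hO_main
  refine (hO_main.sub hO_error).congr_left fun v => ?_
  ring

section IntegrationNearEndpoint

variable {E : Type*} [NormedAddCommGroup E] {f : ℝ → E} {a : ℝ}

lemma eventually_intervalIntegrable_nhdsGT {μ : Measure ℝ} (hf : IntegrableAtFilter f (𝓝[>] a) μ) :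
    ∀ᶠ s in 𝓝[>] a, IntervalIntegrable f μ a s := by
  obtain ⟨t, ht, hft⟩ := hf
  obtain ⟨b, hab, hbt⟩ := mem_nhdsGT_iff_exists_Ioc_subset.1 ht
  filter_upwards [Ioc_mem_nhdsGT hab] with s hs
  rw [intervalIntegrable_iff_integrableOn_Ioc_of_le hs.1.le]
  exact hft.mono_set ((Set.Ioc_subset_Ioc_right hs.2).trans hbt)

lemma isBigO_intervalIntegral_of_isBigO_one [NormedSpace ℝ E]
    (hf : f =O[𝓝[>] a] fun _ => (1 : ℝ)) :
    (fun s => ∫ v in a..s, f v) =O[𝓝[>] a] fun s => s - a := by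
  obtain ⟨C, hC⟩ := hf.bound
  obtain ⟨b, hab, hb⟩ := mem_nhdsGT_iff_exists_Ioc_subset.1 hC
  refine IsBigO.of_bound C ?_
  filter_upwards [Ioc_mem_nhdsGT hab] with s hs
  refine intervalIntegral.norm_integral_le_of_norm_le_const fun v hv => ?_
  rw [Set.uIoc_of_le hs.1.le] at hv
  simpa using hb ⟨hv.1, hv.2.trans hs.2⟩

end IntegrationNearEndpoint

theorem isBigO_intervalIntegral_add_mul_log {G : ℝ → ℝ} {c : ℝ}
    (hGm : StronglyMeasurableAtFilter G (𝓝[>] 0))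
    (hG : (fun v => G v + c * log v) =O[𝓝[>] (0 : ℝ)] fun _ => (1 : ℝ)) :
    (fun s => (∫ v in (0 : ℝ)..s, G v) + c * (s * log s)) =O[𝓝[>] (0 : ℝ)] fun s => s := by
  have hsum_meas : StronglyMeasurableAtFilter (fun v => G v + c * log v) (𝓝[>] 0) := by
    obtain ⟨t, ht, hGt⟩ := hGm
    exact ⟨t, ht, hGt.add (measurable_log.const_mul c).aestronglyMeasurable⟩
  have hone : IntegrableAtFilter (fun _ => (1 : ℝ)) (𝓝[>] (0 : ℝ)) :=
    ⟨Set.Ioc 0 1, Ioc_mem_nhdsGT one_pos, integrableOn_const measure_Ioc_lt_top.ne⟩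
  have hO_id : (fun s : ℝ => c * s) =O[𝓝[>] (0 : ℝ)] fun s => s :=
    (isBigO_refl _ _).const_mul_left c
  have hO_sum := isBigO_intervalIntegral_of_isBigO_one hG
  simp only [sub_zero] at hO_sum
  refine (hO_sum.add hO_id).congr' ?_ EventuallyEq.rfl
  filter_upwards [eventually_intervalIntegrable_nhdsGT (hG.integrableAtFilter hsum_meas hone)]
    with s hs
  have hlog : IntervalIntegrable (fun v => c * log v) volume 0 s :=
    intervalIntegral.intervalIntegrable_log'.const_mul c
  have hdiff := intervalIntegral.integral_sub hs hlog
  simp only [add_sub_cancel_right, intervalIntegral.integral_const_mul, integral_log,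
    zero_mul, sub_zero, add_zero] at hdiff
  rw [hdiff]
  ring

lemma integral_exp_add_mul (α β v : ℝ) (k : ℝ → ℝ) (μ : Measure ℝ) :
    ∫ u, exp (α * u + β * v) * k u ∂μ = exp (β * v) * ∫ u, exp (α * u) * k u ∂μ := by
  rw [← integral_const_mul]
  congr with u
  rw [exp_add]
  ring

theorem stmt3_general (α1 α2 : ℝ) (hα1 : 0 < α1) :
    (fun s : ℝ =>
        (∫ v in (0:ℝ)..s, ∫ u in Set.Iic (0:ℝ),
            Real.exp (α1 * u + α2 * v) * (v - u)⁻¹) + s * Real.log s)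
      =O[𝓝[>] (0:ℝ)] fun s : ℝ => s := by
  have hmeas : StronglyMeasurable fun v : ℝ =>
      ∫ u in Set.Iic (0:ℝ), exp (α1 * u + α2 * v) * (v - u)⁻¹ :=
    StronglyMeasurable.integral_prod_right (Measurable.stronglyMeasurable (by fun_prop))
  have hinner : (fun v => (∫ u in Set.Iic (0:ℝ), exp (α1 * u + α2 * v) * (v - u)⁻¹) + 1 * log v)
      =O[𝓝[>] (0:ℝ)] fun _ => (1:ℝ) := by
    have hweight : DifferentiableAt ℝ (fun v => exp (α2 * v)) 0 := by fun_prop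
    simpa only [integral_exp_add_mul, mul_zero, exp_zero, one_mul] using
      isBigO_mul_add_log (c := 1)
        (by simpa only [one_mul] using isBigO_integral_exp_mul_inv_sub_add_log hα1) hweight
  simpa only [one_mul] using isBigO_intervalIntegral_add_mul_log
    hmeas.aestronglyMeasurable.stronglyMeasurableAtFilter hinner

/-- Short-time expansion of the double integral in the boundary case `H = 1`:
`∫₀ˢ ∫_{-∞}^0 e^{α₁u+α₂v}(v-u)⁻¹ du dv = -s log s + O(s)` as `s → 0⁺`. -/
theorem stmt3
    (α1 α2 : ℝ) (hα1 : 0 < α1) (hα2 : 0 < α2) :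
    (fun s : ℝ =>
        (∫ v in (0:ℝ)..s, ∫ u in Set.Iic (0:ℝ),
            Real.exp (α1 * u + α2 * v) * (v - u)⁻¹) + s * Real.log s)
      =O[𝓝[>] (0:ℝ)] fun s : ℝ => s :=
  stmt3_general α1 α2 hα1
end

section
/- Let $\alpha_1,\alpha_2>0$ and $H\in(0,2)$ with $H\neq 1$. Then, as $s\to 0^+$, $\frac{2C_0-r_{12}(s)-r_{21}(s)}{\nu_1\nu_2\,s^{H}}=\rho+O\big(s^{\min\{1,\,2-H\}}\big)$. -/
open MeasureTheory Filter Asymptotics Topology Real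

/-!
After the substitution `t = v - u` the inner integral of `I₁₂` becomes a scaled upper incomplete
gamma function `Γ_a(H - 1, v)`. Integration by parts and `Γ_a(H, v) = a ^ (-H) Γ(H) + O(v ^ H)` give
`(H - 1) Γ_a(H - 1, v) = a ^ (1 - H) Γ(H) - v ^ (H - 1) + O(v ^ H)`, and integrating in `v` yields
`r₁₂(s) = C₀ - α₂ C₀ s - ν₁ν₂ (ρ - η)/2 (s ^ H - Γ(H + 1) α₁ ^ (1 - H) s) + O(s ^ (min 1 H + 1))`.
In `2 C₀ - r₁₂ - r₂₁` the constants cancel, the linear terms cancel by the choice of `C₀`,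
and `ν₁ν₂ ρ s ^ H` is what remains.
-/

section PowerAsymptotics

lemma rpow_isBigO_rpow_nhdsGT_zero {p q : ℝ} (hpq : p ≤ q) :
    (fun x : ℝ => x ^ q) =O[𝓝[>] 0] fun x => x ^ p := by
  refine IsBigO.of_norm_eventuallyLE ?_
  filter_upwards [Ioc_mem_nhdsGT one_pos] with x hx
  rw [norm_of_nonneg (rpow_nonneg hx.1.le q)]
  exact rpow_le_rpow_of_exponent_ge hx.1 hx.2 hpq

lemma exp_const_mul_sub_one_isBigO (c : ℝ) :
    (fun x : ℝ => exp (c * x) - 1) =O[𝓝[>] 0] fun x => x ^ (1 : ℝ) := by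
  have hderiv : HasDerivAt (fun x => exp (c * x)) c 0 := by
    simpa using ((hasDerivAt_id (0 : ℝ)).const_mul c).exp
  simpa using hderiv.isBigO_sub.mono nhdsWithin_le_nhds

lemma exp_const_mul_sub_one_sub_isBigO (c : ℝ) :
    (fun x : ℝ => exp (c * x) - 1 - c * x) =O[𝓝[>] 0] fun x => x ^ (2 : ℝ) := by
  have htendsto : Tendsto (fun x : ℝ => c * x) (𝓝[>] 0) (𝓝 0) :=
    Tendsto.mono_left (by simpa using (continuous_const_mul c).tendsto 0) nhdsWithin_le_nhds
  have hexp := (exp_sub_sum_range_isBigO_pow 2).comp_tendsto htendsto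
  have hpow : (fun x : ℝ => (c * x) ^ 2) =O[𝓝[>] 0] fun x => x ^ (2 : ℝ) := by
    simpa only [mul_pow, rpow_two] using (isBigO_refl (fun x : ℝ => x ^ 2) _).const_mul_left (c ^ 2)
  refine (hexp.trans hpow).congr_left fun x => ?_
  simp [Finset.sum_range_succ, sub_sub]

lemma exp_const_mul_mul_sub_isBigO {f P : ℝ → ℝ} {q : ℝ} (c : ℝ)
    (hP : P =O[𝓝[>] 0] fun x => x ^ (q - 1))
    (hf : (fun x => f x - P x) =O[𝓝[>] 0] fun x => x ^ q) :
    (fun x => exp (c * x) * f x - P x) =O[𝓝[>] 0] fun x => x ^ q := by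
  have hf' : f =O[𝓝[>] 0] fun x => x ^ (q - 1) :=
    ((hf.trans (rpow_isBigO_rpow_nhdsGT_zero (sub_le_self q zero_le_one))).add hP).congr_left
      fun x => sub_add_cancel _ _
  have hprod : (fun x => (exp (c * x) - 1) * f x) =O[𝓝[>] 0] fun x => x ^ q := by
    refine ((exp_const_mul_sub_one_isBigO c).mul hf').congr' .rfl ?_
    filter_upwards [self_mem_nhdsWithin] with x hx
    rw [← rpow_add hx, add_sub_cancel]
  exact (hprod.add hf).congr_left fun x => by ring

lemma intervalIntegral_isBigO_rpow {E : Type*} [NormedAddCommGroup E] [NormedSpace ℝ E]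
    {f : ℝ → E} {q : ℝ} (hq : -1 < q) (hf : f =O[𝓝[>] 0] fun x => x ^ q) :
    (fun s => ∫ v in (0 : ℝ)..s, f v) =O[𝓝[>] 0] fun s => s ^ (q + 1) := by
  obtain ⟨C, hC⟩ := hf.bound
  obtain ⟨δ, hδ, hbound⟩ := (mem_nhdsGT_iff_exists_Ioo_subset).1 hC
  refine IsBigO.of_bound (C / (q + 1)) ?_
  filter_upwards [Ioo_mem_nhdsGT hδ] with s hs
  calc ‖∫ v in (0 : ℝ)..s, f v‖
      ≤ ∫ v in (0 : ℝ)..s, C * v ^ q := by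
        refine intervalIntegral.norm_integral_le_of_norm_le hs.1.le (.of_forall fun v hv => ?_)
          ((intervalIntegral.intervalIntegrable_rpow' hq).const_mul C)
        simpa [abs_of_nonneg (rpow_nonneg hv.1.le q)] using hbound ⟨hv.1, hv.2.trans_lt hs.2⟩
    _ = C / (q + 1) * s ^ (q + 1) := by
        rw [intervalIntegral.integral_const_mul, integral_rpow (.inl hq),
          zero_rpow (by linarith)]
        ring
    _ = C / (q + 1) * ‖s ^ (q + 1)‖ := by
        rw [norm_of_nonneg (rpow_nonneg hs.1.le _)]

end PowerAsymptotics

/-- The upper incomplete gamma function with rate `a`, normalised so that `upperGamma a p v` tends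
to `a ^ (-p) * Γ(p)` as `v → 0⁺` when `0 < p`. -/
noncomputable def upperGamma (a p v : ℝ) : ℝ :=
  ∫ t in Set.Ioi v, t ^ (p - 1) * exp (-a * t)

section UpperGamma

variable {a p v : ℝ}

lemma integral_Iic_exp_mul_rpow (a p v : ℝ) :
    ∫ u in Set.Iic (0 : ℝ), exp (a * u) * (v - u) ^ (p - 1) = exp (a * v) * upperGamma a p v := by
  have hpreimage : (fun u : ℝ => v - u) ⁻¹' Set.Ici v = Set.Iic 0 := by ext; simp
  have hsubst := (volume.measurePreserving_sub_left v).setIntegral_preimage_emb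
    (Homeomorph.subLeft v).measurableEmbedding
    (fun t => exp (a * v) * (t ^ (p - 1) * exp (-a * t))) (Set.Ici v)
  rw [upperGamma, ← integral_Ici_eq_integral_Ioi, ← integral_const_mul, ← hsubst, hpreimage]
  congr! 2 with u
  rw [mul_left_comm, ← exp_add, mul_comm]
  ring_nf

lemma integrableOn_Ioi_rpow_mul_exp_neg_mul (ha : 0 < a) (hv : 0 < v) (q : ℝ) :
    IntegrableOn (fun t : ℝ => t ^ q * exp (-a * t)) (Set.Ioi v) := by
  refine integrable_of_isBigO_exp_neg (half_pos ha) ?_ ?_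
  · exact (continuousOn_id.rpow_const fun t ht => .inl (hv.trans_le ht).ne').mul (by fun_prop)
  · refine ((isLittleO_rpow_exp_pos_mul_atTop q (half_pos ha)).isBigO.mul
      (isBigO_refl (fun t => exp (-a * t)) atTop)).congr_right fun t => ?_
    rw [← exp_add]
    ring_nf

lemma integrableOn_Ioi_zero_rpow_mul_exp_neg_mul (ha : 0 < a) (hp : 0 < p) :
    IntegrableOn (fun t : ℝ => t ^ (p - 1) * exp (-a * t)) (Set.Ioi 0) := by
  simpa using integrableOn_rpow_mul_exp_neg_mul_rpow (s := p - 1) (by linarith) one_pos ha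

lemma mul_upperGamma (ha : 0 < a) (hv : 0 < v) (p : ℝ) :
    p * upperGamma a p v = a * upperGamma a (p + 1) v - v ^ p * exp (-a * v) := by
  have hint := integrableOn_Ioi_rpow_mul_exp_neg_mul ha hv
  have hderiv : ∀ t ∈ Set.Ici v, HasDerivAt (fun t : ℝ => t ^ p * exp (-a * t))
      (p * (t ^ (p - 1) * exp (-a * t)) - a * (t ^ p * exp (-a * t))) t := fun t ht => by
    have hexp : HasDerivAt (fun t => exp (-a * t)) (exp (-a * t) * -a) t := by
      simpa using ((hasDerivAt_id t).const_mul (-a)).exp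
    exact ((hasDerivAt_rpow_const (.inl (hv.trans_le ht).ne')).mul hexp).congr_deriv (by ring)
  have hparts := integral_Ioi_of_hasDerivAt_of_tendsto' hderiv
    (((hint (p - 1)).const_mul p).sub ((hint p).const_mul a))
    (tendsto_rpow_mul_exp_neg_mul_atTop_nhds_zero p a ha)
  rw [integral_sub ((hint (p - 1)).const_mul p) ((hint p).const_mul a), integral_const_mul,
    integral_const_mul] at hparts
  rw [upperGamma, upperGamma, add_sub_cancel_right]
  linarith

lemma upperGamma_zero (ha : 0 < a) (hp : 0 < p) : upperGamma a p 0 = a ^ (-p) * Gamma p := by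
  simpa [upperGamma, ← rpow_neg_eq_inv_rpow] using integral_rpow_mul_exp_neg_mul_Ioi hp ha

lemma upperGamma_sub_isBigO (ha : 0 < a) (hp : 0 < p) :
    (fun v => upperGamma a p v - a ^ (-p) * Gamma p) =O[𝓝[>] 0] fun v => v ^ p := by
  have hintegrand : (fun t : ℝ => t ^ (p - 1) * exp (-a * t)) =O[𝓝[>] 0] fun t => t ^ (p - 1) := by
    refine IsBigO.of_norm_eventuallyLE ?_
    filter_upwards [self_mem_nhdsWithin] with t (ht : 0 < t)
    rw [norm_of_nonneg (by positivity)]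
    exact mul_le_of_le_one_right (by positivity) (exp_le_one_iff.2 (by nlinarith))
  have hprimitive := intervalIntegral_isBigO_rpow (by linarith) hintegrand
  rw [sub_add_cancel] at hprimitive
  refine hprimitive.neg_left.congr' ?_ .rfl
  filter_upwards [self_mem_nhdsWithin] with v (hv : 0 < v)
  rw [← upperGamma_zero ha hp, upperGamma, upperGamma, ← intervalIntegral.integral_Ioi_sub_Ioi
    (integrableOn_Ioi_zero_rpow_mul_exp_neg_mul ha hp) hv.le, neg_sub]

lemma mul_upperGamma_sub_isBigO (ha : 0 < a) (hp : -1 < p) :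
    (fun v => p * upperGamma a p v - (a ^ (-p) * Gamma (p + 1) - v ^ p))
      =O[𝓝[>] 0] fun v => v ^ (p + 1) := by
  have hgamma := (upperGamma_sub_isBigO ha (by linarith : 0 < p + 1)).const_mul_left a
  have hexp : (fun v : ℝ => v ^ p * (exp (-a * v) - 1)) =O[𝓝[>] 0] fun v => v ^ (p + 1) := by
    refine ((isBigO_refl (fun v : ℝ => v ^ p) _).mul (exp_const_mul_sub_one_isBigO (-a))).congr'
      .rfl ?_
    filter_upwards [self_mem_nhdsWithin] with v hv
    rw [rpow_add hv]
  refine (hgamma.sub hexp).congr' ?_ .rfl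
  filter_upwards [self_mem_nhdsWithin] with v hv
  have hpow : a ^ (-p) = a * a ^ (-(p + 1)) := by
    rw [mul_comm, ← rpow_add_one ha.ne']
    ring_nf
  rw [mul_upperGamma ha hv, hpow]
  ring

lemma intervalIntegrable_mul_upperGamma (ha : 0 < a) (hp : -1 < p) {s : ℝ} (hs : 0 ≤ s) :
    IntervalIntegrable (fun v => p * upperGamma a p v) volume 0 s := by
  have hcont : ContinuousOn (upperGamma a (p + 1)) (Set.uIcc 0 s) :=
    (integrableOn_Ioi_zero_rpow_mul_exp_neg_mul ha
      (by linarith : 0 < p + 1)).continuousOn_Ici_primitive_Ioi.mono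
      (Set.uIcc_of_le hs ▸ Set.Icc_subset_Ici_self)
  have hpow : IntervalIntegrable (fun v : ℝ => v ^ p * exp (-a * v)) volume 0 s :=
    (intervalIntegral.intervalIntegrable_rpow' hp).mul_continuousOn (by fun_prop)
  refine ((hcont.intervalIntegrable.const_mul a).sub hpow).congr fun v hv => ?_
  rw [Set.uIoc_of_le hs] at hv
  exact (mul_upperGamma ha hv.1 p).symm

end UpperGamma

/-- The double integral `I₁₂` of the paper, with `a = α₁` and `b = α₂`; exchanging `a` and `b`
gives `I₂₁`. -/
noncomputable def crossIntegral (a b H s : ℝ) : ℝ :=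
  ∫ v in (0 : ℝ)..s, exp (b * v) * ∫ u in Set.Iic (0 : ℝ), exp (a * u) * (v - u) ^ (H - 2)

/-- The lagged cross-covariance `r₁₂` of the paper, with `a = α₁`, `b = α₂`, value `c = C₀` at lag
zero and amplitude `w = ν₁ν₂ (ρ - η) / 2`; exchanging `a` and `b` and taking
`w = ν₁ν₂ (ρ + η) / 2` gives `r₂₁`. -/
noncomputable def crossCov (a b H c w s : ℝ) : ℝ :=
  exp (-b * s) * (c + w * (H * (H - 1)) * crossIntegral a b H s)

section CrossCov

variable {a H : ℝ}

lemma crossIntegral_eq_integral_upperGamma (a b H s : ℝ) :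
    crossIntegral a b H s
      = ∫ v in (0 : ℝ)..s, exp ((a + b) * v) * upperGamma a (H - 1) v := by
  unfold crossIntegral
  congr! 2 with v
  rw [show H - 2 = H - 1 - 1 by ring, integral_Iic_exp_mul_rpow, ← mul_assoc, ← exp_add]
  ring_nf

lemma mul_crossIntegral_sub_isBigO (ha : 0 < a) (hH : 0 < H) (b : ℝ) :
    (fun s => (H - 1) * crossIntegral a b H s - (a ^ (1 - H) * Gamma H * s - s ^ H / H))
      =O[𝓝[>] 0] fun s => s ^ (min 1 H + 1) := by
  set P : ℝ → ℝ := fun v => a ^ (1 - H) * Gamma H - v ^ (H - 1)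
  have hP : P =O[𝓝[>] 0] fun v => v ^ (min 1 H - 1) := by
    refine .sub ?_ (rpow_isBigO_rpow_nhdsGT_zero (by gcongr; exact min_le_right 1 H))
    simpa using (rpow_isBigO_rpow_nhdsGT_zero (by simp : min 1 H - 1 ≤ 0)).const_mul_left
      (a ^ (1 - H) * Gamma H)
  have hgamma : (fun v => (H - 1) * upperGamma a (H - 1) v - P v)
      =O[𝓝[>] 0] fun v => v ^ min 1 H := by
    have h := mul_upperGamma_sub_isBigO ha (by linarith : -1 < H - 1)
    rw [neg_sub, sub_add_cancel] at h
    exact h.trans (rpow_isBigO_rpow_nhdsGT_zero (min_le_right 1 H))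
  have hprimitive := intervalIntegral_isBigO_rpow (by linarith [lt_min one_pos hH])
    (exp_const_mul_mul_sub_isBigO (a + b) hP hgamma)
  refine hprimitive.congr' ?_ .rfl
  filter_upwards [self_mem_nhdsWithin] with s (hs : 0 < s)
  have hpow : IntervalIntegrable (fun v : ℝ => v ^ (H - 1)) volume 0 s :=
    intervalIntegral.intervalIntegrable_rpow' (by linarith)
  have hintegral_P : ∫ v in (0 : ℝ)..s, P v = a ^ (1 - H) * Gamma H * s - s ^ H / H := by
    rw [intervalIntegral.integral_sub intervalIntegrable_const hpow,
      integral_rpow (.inl (by linarith))]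
    simp only [intervalIntegral.integral_const, sub_zero, smul_eq_mul, sub_add_cancel,
      zero_rpow hH.ne']
    ring
  rw [intervalIntegral.integral_sub ((intervalIntegrable_mul_upperGamma ha (by linarith)
      hs.le).continuousOn_mul (by fun_prop)) (intervalIntegrable_const.sub hpow), hintegral_P,
    crossIntegral_eq_integral_upperGamma, ← intervalIntegral.integral_const_mul]
  simp only [mul_left_comm]

lemma crossCov_sub_isBigO (ha : 0 < a) (hH : 0 < H) (b c w : ℝ) :
    (fun s => crossCov a b H c w s
        - (c - b * c * s - w * (s ^ H - Gamma (H + 1) * a ^ (1 - H) * s)))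
      =O[𝓝[>] 0] fun s => s ^ (min 1 H + 1) := by
  set P : ℝ → ℝ := fun s => a ^ (1 - H) * Gamma H * s - s ^ H / H
  have hP : P =O[𝓝[>] 0] fun s => s ^ (min 1 H + 1 - 1) := by
    rw [add_sub_cancel_right]
    refine .sub ?_ ?_
    · simpa using (rpow_isBigO_rpow_nhdsGT_zero (min_le_left 1 H)).const_mul_left
        (a ^ (1 - H) * Gamma H)
    · simpa only [div_eq_inv_mul] using
        (rpow_isBigO_rpow_nhdsGT_zero (min_le_right 1 H)).const_mul_left H⁻¹
  have hintegral := exp_const_mul_mul_sub_isBigO (-b) hP (mul_crossIntegral_sub_isBigO ha hH b)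
  have hexp := (exp_const_mul_sub_one_sub_isBigO (-b)).trans
    (rpow_isBigO_rpow_nhdsGT_zero (by linarith [min_le_left 1 H] : min 1 H + 1 ≤ 2))
  refine ((hexp.const_mul_left c).add (hintegral.const_mul_left (w * H))).congr_left fun s => ?_
  simp only [crossCov, P, Gamma_add_one hH.ne']
  field_simp
  ring

end CrossCov

theorem stmt6_general
    (α1 α2 ν1 ν2 H ρ η : ℝ)
    (hα1 : 0 < α1) (hα2 : 0 < α2) (hν1 : ν1 ≠ 0) (hν2 : ν2 ≠ 0) (hH : 0 < H)
    (C0 : ℝ)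
    (hC0 : C0 = Real.Gamma (H + 1) * ν1 * ν2 / (2 * (α1 + α2)) *
      ((α1 ^ (1 - H) + α2 ^ (1 - H)) * ρ + (α2 ^ (1 - H) - α1 ^ (1 - H)) * η))
    (I12 I21 : ℝ → ℝ)
    (hI12 : ∀ s, I12 s =
      ∫ v in (0 : ℝ)..s, Real.exp (α2 * v) *
        ∫ u in Set.Iic (0 : ℝ), Real.exp (α1 * u) * (v - u) ^ (H - 2))
    (hI21 : ∀ s, I21 s =
      ∫ v in (0 : ℝ)..s, Real.exp (α1 * v) *
        ∫ u in Set.Iic (0 : ℝ), Real.exp (α2 * u) * (v - u) ^ (H - 2))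
    (r12 r21 : ℝ → ℝ)
    (hr12 : ∀ s, r12 s = Real.exp (-α2 * s) * C0 +
      ν1 * ν2 * Real.exp (-α2 * s) * (H * (H - 1)) * ((ρ - η) / 2) * I12 s)
    (hr21 : ∀ s, r21 s = Real.exp (-α1 * s) * C0 +
      ν1 * ν2 * Real.exp (-α1 * s) * (H * (H - 1)) * ((ρ + η) / 2) * I21 s) :
    (fun s : ℝ => (2 * C0 - r12 s - r21 s) / (ν1 * ν2 * s ^ H) - ρ)
      =O[𝓝[>] (0 : ℝ)] fun s : ℝ => s ^ min 1 (2 - H) := by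
  obtain rfl : I12 = crossIntegral α1 α2 H := funext hI12
  obtain rfl : I21 = crossIntegral α2 α1 H := funext hI21
  obtain rfl : r12 = crossCov α1 α2 H C0 (ν1 * ν2 * ((ρ - η) / 2)) :=
    funext fun s => by rw [hr12, crossCov]; ring
  obtain rfl : r21 = crossCov α2 α1 H C0 (ν1 * ν2 * ((ρ + η) / 2)) :=
    funext fun s => by rw [hr21, crossCov]; ring
  have hlinear : C0 * (α1 + α2) = Gamma (H + 1) * ν1 * ν2 / 2 *
      ((α1 ^ (1 - H) + α2 ^ (1 - H)) * ρ + (α2 ^ (1 - H) - α1 ^ (1 - H)) * η) := by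
    rw [hC0]
    field_simp
  have hnumerator := (crossCov_sub_isBigO hα1 hH α2 C0 (ν1 * ν2 * ((ρ - η) / 2))).add
    (crossCov_sub_isBigO hα2 hH α1 C0 (ν1 * ν2 * ((ρ + η) / 2)))
  have hquotient := (hnumerator.mul (isBigO_refl (fun s : ℝ => s ^ (-H)) _)).const_mul_left
    (-(ν1 * ν2)⁻¹)
  refine hquotient.congr' ?_ ?_ <;> filter_upwards [self_mem_nhdsWithin] with s (hs : 0 < s)
  · have hsH : s ^ H ≠ 0 := (rpow_pos_of_pos hs H).ne'
    rw [rpow_neg hs.le]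
    field_simp
    linear_combination -2 * s * hlinear
  · rw [← rpow_add hs, ← min_add_add_right, ← min_add_add_right, min_comm]
    ring_nf

/-- The `ρ`-formula of Lemma 3.12: as `s → 0⁺`,
`(2C₀ - r₁₂(s) - r₂₁(s)) / (ν₁ν₂ s^H) = ρ + O(s^{min(1, 2-H)})`. -/
theorem stmt6
    (α1 α2 ν1 ν2 H ρ η : ℝ)
    (hα1 : 0 < α1) (hα2 : 0 < α2) (hν1 : 0 < ν1) (hν2 : 0 < ν2)
    (hH : H ∈ Set.Ioo (0:ℝ) 2) (hH1 : H ≠ 1)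
    (C0 : ℝ)
    (hC0 : C0 = Real.Gamma (H + 1) * ν1 * ν2 / (2 * (α1 + α2)) *
      ((α1 ^ (1 - H) + α2 ^ (1 - H)) * ρ + (α2 ^ (1 - H) - α1 ^ (1 - H)) * η))
    (I12 I21 : ℝ → ℝ)
    (hI12 : ∀ s, I12 s =
      ∫ v in (0:ℝ)..s, Real.exp (α2 * v) *
        ∫ u in Set.Iic (0:ℝ), Real.exp (α1 * u) * (v - u) ^ (H - 2))
    (hI21 : ∀ s, I21 s =
      ∫ v in (0:ℝ)..s, Real.exp (α1 * v) *
        ∫ u in Set.Iic (0:ℝ), Real.exp (α2 * u) * (v - u) ^ (H - 2))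
    (r12 r21 : ℝ → ℝ)
    (hr12 : ∀ s, r12 s = Real.exp (-α2 * s) * C0 +
      ν1 * ν2 * Real.exp (-α2 * s) * (H * (H - 1)) * ((ρ - η) / 2) * I12 s)
    (hr21 : ∀ s, r21 s = Real.exp (-α1 * s) * C0 +
      ν1 * ν2 * Real.exp (-α1 * s) * (H * (H - 1)) * ((ρ + η) / 2) * I21 s) :
    (fun s : ℝ => (2 * C0 - r12 s - r21 s) / (ν1 * ν2 * s ^ H) - ρ)
      =O[𝓝[>] (0:ℝ)] fun s : ℝ => s ^ min 1 (2 - H) :=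
  stmt6_general α1 α2 ν1 ν2 H ρ η hα1 hα2 hν1.ne' hν2.ne' hH.1 C0 hC0 I12 I21 hI12 hI21 r12 r21
    hr12 hr21
end

section
/- Let $\alpha_1,\alpha_2>0$ and $H\in(0,1)$. Then, as $s\to 0^+$, $\frac{r_{12}(s)-r_{21}(s)}{\nu_1\nu_2\,s^{H}}=\eta+O\big(s^{1-H}\big)$. -/
open MeasureTheory Filter Asymptotics Topology Real

/-! Both cross-covariances take the same value `C0` at lag zero, so only their increments matter.
Near `v = 0` the weight `e^{au}` of the past kernel is irrelevant up to a bounded error,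
`∫_{u ≤ 0} e^{au} (v - u)^{H-2} du = v^{H-1} / (1 - H) + O(1)`, because the correction
`∫_{t > 0} (1 - e^{-at}) (v + t)^{H-2} dt` is dominated by its finite value at `v = 0`.
Integrating gives `r(s) = C0 - κ s^H + O(s)`, with `κ = ν₁ν₂ (ρ ∓ η) / 2` in the two cases.
In the difference `C0` and `ρ` cancel and `ν₁ν₂ η s^H + O(s)` remains. -/

section BoundedIntegrand

variable {E : Type*} [NormedAddCommGroup E] {f g : ℝ → E} {a : ℝ}

lemma eventually_forall_mem_Ioc_of_eventually_nhdsGT {P : ℝ → Prop} (h : ∀ᶠ x in 𝓝[>] a, P x) :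
    ∀ᶠ b in 𝓝[>] a, ∀ x ∈ Set.Ioc a b, P x := by
  obtain ⟨c, hac, hc⟩ := mem_nhdsGT_iff_exists_Ioc_subset.1 h
  filter_upwards [Ioc_mem_nhdsGT hac] with b hb x hx
  exact hc ⟨hx.1, hx.2.trans hb.2⟩

lemma eventually_intervalIntegrable_of_integrableAtFilter_nhdsGT
    (hf : IntegrableAtFilter f (𝓝[>] a)) :
    ∀ᶠ b in 𝓝[>] a, IntervalIntegrable f volume a b := by
  obtain ⟨t, ht, hft⟩ := hf
  filter_upwards [eventually_forall_mem_Ioc_of_eventually_nhdsGT ht, self_mem_nhdsWithin]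
    with b hb hab
  exact (intervalIntegrable_iff_integrableOn_Ioc_of_le (le_of_lt hab)).2 (hft.mono_set hb)

variable [NormedSpace ℝ E]

lemma isBigO_integral_of_isBigO_one (hf : f =O[𝓝[>] a] fun _ => (1 : ℝ)) :
    (fun b => ∫ x in a..b, f x) =O[𝓝[>] a] fun b => b - a := by
  obtain ⟨C, hC⟩ := hf.bound
  refine .of_bound C ?_
  filter_upwards [eventually_forall_mem_Ioc_of_eventually_nhdsGT hC, self_mem_nhdsWithin]
    with b hb hab
  refine intervalIntegral.norm_integral_le_of_norm_le_const fun x hx => ?_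
  rw [Set.uIoc_of_le (le_of_lt hab)] at hx
  simpa using hb x hx

lemma isBigO_integral_sub_integral
    (hfg : StronglyMeasurableAtFilter (fun x => f x - g x) (𝓝[>] a))
    (hg : IntegrableAtFilter g (𝓝[>] a))
    (h : (fun x => f x - g x) =O[𝓝[>] a] fun _ => (1 : ℝ)) :
    (fun b => (∫ x in a..b, f x) - ∫ x in a..b, g x) =O[𝓝[>] a] fun b => b - a := by
  have hsub : IntegrableAtFilter (fun x => f x - g x) (𝓝[>] a) :=
    h.integrableAtFilter hfg
      ⟨Set.Ioc a (a + 1), Ioc_mem_nhdsGT (by linarith), integrableOn_const (by simp)⟩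
  refine (isBigO_integral_of_isBigO_one h).congr' ?_ .rfl
  filter_upwards [eventually_intervalIntegrable_of_integrableAtFilter_nhdsGT hsub,
    eventually_intervalIntegrable_of_integrableAtFilter_nhdsGT hg] with b hsubb hgb
  have hfb : IntervalIntegrable f volume a b := by simpa using hsubb.add hgb
  exact intervalIntegral.integral_sub hfb hgb

end BoundedIntegrand

lemma isBigO_exp_mul_sub_one (c : ℝ) : (fun x => exp (c * x) - 1) =O[𝓝 0] fun x => x := by
  have hd : DifferentiableAt ℝ (fun x => exp (c * x)) 0 := by fun_prop
  simpa using hd.isBigO_sub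

lemma isBigO_exp_mul_mul_sub {l : Filter ℝ} (hl : l ≤ 𝓝 0) (c : ℝ) {f g k : ℝ → ℝ}
    (hfg : (fun x => f x - g x) =O[l] k) (hg : (fun x => x * g x) =O[l] k) :
    (fun x => exp (c * x) * f x - g x) =O[l] k := by
  have hexp : (fun x => exp (c * x)) =O[l] fun _ => (1 : ℝ) :=
    (((by fun_prop : Continuous fun x => exp (c * x)).tendsto 0).isBigO_one ℝ).mono hl
  have hmain : (fun x => exp (c * x) * (f x - g x)) =O[l] k := by simpa using hexp.mul hfg
  have hcorr : (fun x => (exp (c * x) - 1) * g x) =O[l] k :=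
    (((isBigO_exp_mul_sub_one c).mono hl).mul (isBigO_refl g l)).trans hg
  exact (hmain.add hcorr).congr_left fun x => by ring

section DampedPower

variable {a p v : ℝ}

lemma integrableOn_one_sub_exp_neg_mul_rpow (ha : 0 ≤ a) (hp : -2 < p) (hp' : p < -1) :
    IntegrableOn (fun t => (1 - exp (-a * t)) * t ^ p) (Set.Ioi 0) := by
  have hmeas : Measurable fun t : ℝ => (1 - exp (-a * t)) * t ^ p := by fun_prop
  have hnonneg {t : ℝ} (ht : 0 < t) : 0 ≤ (1 - exp (-a * t)) * t ^ p :=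
    mul_nonneg (sub_nonneg.2 (exp_le_one_iff.2 (by nlinarith))) (by positivity)
  rw [← Set.Ioc_union_Ioi_eq_Ioi zero_le_one]
  refine .union ?_ ?_
  · have hdom : IntegrableOn (fun t : ℝ => a * t ^ (p + 1)) (Set.Ioc 0 1) :=
      ((intervalIntegrable_iff_integrableOn_Ioc_of_le zero_le_one).1
        (intervalIntegral.intervalIntegrable_rpow' (by linarith))).const_mul a
    refine hdom.mono' hmeas.aestronglyMeasurable
      (ae_restrict_of_forall_mem measurableSet_Ioc fun t ht => ?_)
    rw [norm_of_nonneg (hnonneg ht.1), rpow_add_one ht.1.ne']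
    have := rpow_nonneg ht.1.le p
    nlinarith [add_one_le_exp (-a * t)]
  · refine (integrableOn_Ioi_rpow_of_lt hp' one_pos).mono' hmeas.aestronglyMeasurable
      (ae_restrict_of_forall_mem measurableSet_Ioi fun t (ht : 1 < t) => ?_)
    rw [norm_of_nonneg (hnonneg (one_pos.trans ht))]
    exact mul_le_of_le_one_left (by positivity) (by linarith [exp_pos (-a * t)])

lemma integral_Ioi_add_rpow_of_lt (hp : p < -1) (hv : 0 < v) :
    ∫ t in Set.Ioi 0, (t + v) ^ p = -v ^ (p + 1) / (p + 1) := by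
  have := (measurePreserving_add_right volume v).setIntegral_preimage_emb
    (measurableEmbedding_addRight v) (fun t => t ^ p) (Set.Ioi v)
  simpa [integral_Ioi_rpow_of_lt hp hv] using this

lemma integrableOn_exp_neg_mul_add_rpow (ha : 0 ≤ a) (hp : p < -1) (hv : 0 < v) :
    IntegrableOn (fun t => exp (-a * t) * (t + v) ^ p) (Set.Ioi 0) := by
  refine (integrableOn_add_rpow_Ioi_of_lt hp (by linarith)).mono'
    (by fun_prop : Measurable _).aestronglyMeasurable
    (ae_restrict_of_forall_mem measurableSet_Ioi fun t (ht : 0 < t) => ?_)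
  rw [norm_of_nonneg (by positivity)]
  exact mul_le_of_le_one_left (by positivity) (exp_le_one_iff.2 (by nlinarith))

lemma abs_integral_exp_neg_mul_add_rpow_sub_le (ha : 0 ≤ a) (hp : -2 < p) (hp' : p < -1)
    (hv : 0 < v) :
    |(∫ t in Set.Ioi 0, exp (-a * t) * (t + v) ^ p) - -v ^ (p + 1) / (p + 1)| ≤
      ∫ t in Set.Ioi 0, (1 - exp (-a * t)) * t ^ p := by
  rw [← integral_Ioi_add_rpow_of_lt hp' hv, ← integral_sub
    (integrableOn_exp_neg_mul_add_rpow ha hp' hv)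
    (integrableOn_add_rpow_Ioi_of_lt hp' (by linarith)), ← norm_eq_abs]
  refine norm_integral_le_of_norm_le (integrableOn_one_sub_exp_neg_mul_rpow ha hp hp')
    (ae_restrict_of_forall_mem measurableSet_Ioi fun t (ht : 0 < t) => ?_)
  have hexp : 0 ≤ 1 - exp (-a * t) := sub_nonneg.2 (exp_le_one_iff.2 (by nlinarith))
  calc ‖exp (-a * t) * (t + v) ^ p - (t + v) ^ p‖
      = (1 - exp (-a * t)) * (t + v) ^ p := by
        rw [← neg_sub, norm_neg, ← one_sub_mul, norm_of_nonneg (by positivity)]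
    _ ≤ (1 - exp (-a * t)) * t ^ p :=
        mul_le_mul_of_nonneg_left
          (rpow_le_rpow_of_nonpos ht (by linarith) (by linarith)) hexp

end DampedPower

/-- The inner integral of the paper's `I₁₂` and `I₂₁`: the fractional kernel `(v - u)^{H-2}`
seen from time `v`, averaged over the past with exponential weight of rate `a`. -/
noncomputable def pastKernel (a H v : ℝ) : ℝ :=
  ∫ u in Set.Iic (0 : ℝ), exp (a * u) * (v - u) ^ (H - 2)

/-- The integrals `I₁₂` (for `a = α₁`, `b = α₂`) and `I₂₁` (for `a = α₂`, `b = α₁`). -/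
noncomputable def lagIntegral (a b H s : ℝ) : ℝ :=
  ∫ v in (0 : ℝ)..s, exp (b * v) * pastKernel a H v

/-- The lagged cross-covariance functions: `r₁₂` for `a = α₁`, `b = α₂`, `κ = ν₁ν₂ (ρ - η) / 2`, and
`r₂₁` for `a = α₂`, `b = α₁`, `κ = ν₁ν₂ (ρ + η) / 2`. The parameter `C` is the covariance at
lag zero. -/
noncomputable def lagCov (a b H C κ s : ℝ) : ℝ :=
  exp (-b * s) * C + exp (-b * s) * (H * (H - 1)) * κ * lagIntegral a b H s

section LagCov

variable {a H : ℝ}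

lemma pastKernel_eq_integral_Ioi (a H v : ℝ) :
    pastKernel a H v = ∫ t in Set.Ioi 0, exp (-a * t) * (t + v) ^ (H - 2) := by
  rw [pastKernel, ← neg_zero, ← integral_comp_neg_Iic]
  simp [sub_eq_neg_add]

lemma measurable_pastKernel (a H : ℝ) : Measurable (pastKernel a H) := by
  have hm : Measurable fun x : ℝ × ℝ => exp (a * x.2) * (x.1 - x.2) ^ (H - 2) := by fun_prop
  exact hm.stronglyMeasurable.integral_prod_right'.measurable

lemma isBigO_pastKernel_sub (ha : 0 ≤ a) (hH : H ∈ Set.Ioo 0 1) :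
    (fun v => pastKernel a H v - v ^ (H - 1) / (1 - H)) =O[𝓝[>] 0] fun _ => (1 : ℝ) := by
  refine .of_bound (∫ t in Set.Ioi 0, (1 - exp (-a * t)) * t ^ (H - 2)) ?_
  filter_upwards [self_mem_nhdsWithin] with v hv
  have hle := abs_integral_exp_neg_mul_add_rpow_sub_le (p := H - 2) ha (by linarith [hH.1])
    (by linarith [hH.2]) hv
  rw [← pastKernel_eq_integral_Ioi, show H - 2 + 1 = -(1 - H) by ring, neg_div_neg_eq,
    neg_sub] at hle
  simpa using hle

lemma isBigO_exp_mul_pastKernel_sub (ha : 0 ≤ a) (b : ℝ) (hH : H ∈ Set.Ioo 0 1) :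
    (fun v => exp (b * v) * pastKernel a H v - v ^ (H - 1) / (1 - H)) =O[𝓝[>] 0]
      fun _ => (1 : ℝ) := by
  refine isBigO_exp_mul_mul_sub nhdsWithin_le_nhds b (isBigO_pastKernel_sub ha hH) ?_
  have hcont : Continuous fun v : ℝ => v ^ H / (1 - H) :=
    (continuous_id.rpow_const fun _ => Or.inr hH.1.le).div_const _
  refine (((hcont.tendsto 0).isBigO_one ℝ).mono nhdsWithin_le_nhds).congr' ?_ .rfl
  filter_upwards [self_mem_nhdsWithin] with v (hv : 0 < v)
  rw [← mul_div_assoc, ← rpow_one_add' hv.le (by linarith [hH.1]), add_sub_cancel]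

lemma isBigO_lagIntegral_sub (ha : 0 ≤ a) (b : ℝ) (hH : H ∈ Set.Ioo 0 1) :
    (fun s => lagIntegral a b H s - s ^ H / (H * (1 - H))) =O[𝓝[>] 0] fun s => s := by
  have hmeas : Measurable fun v : ℝ => exp (b * v) * pastKernel a H v - v ^ (H - 1) / (1 - H) := by
    have := measurable_pastKernel a H
    fun_prop
  have hint (s : ℝ) : IntervalIntegrable (fun v => v ^ (H - 1) / (1 - H)) volume 0 s :=
    (intervalIntegral.intervalIntegrable_rpow' (by linarith [hH.1])).div_const _
  have hval (s : ℝ) : ∫ v in (0 : ℝ)..s, v ^ (H - 1) / (1 - H) = s ^ H / (H * (1 - H)) := by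
    rw [intervalIntegral.integral_div, integral_rpow (.inl (by linarith [hH.1])), sub_add_cancel,
      zero_rpow hH.1.ne', sub_zero, div_div]
  have hdiff := isBigO_integral_sub_integral hmeas.stronglyMeasurable.stronglyMeasurableAtFilter
    ⟨_, Ioc_mem_nhdsGT one_pos, (hint 1).1⟩ (isBigO_exp_mul_pastKernel_sub ha b hH)
  simpa only [hval, sub_zero, lagIntegral] using hdiff

lemma isBigO_lagCov_sub (ha : 0 ≤ a) (b : ℝ) (hH : H ∈ Set.Ioo 0 1) (C κ : ℝ) :
    (fun s => lagCov a b H C κ s - (C - κ * s ^ H)) =O[𝓝[>] 0] fun s => s := by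
  have hcont : Continuous fun s : ℝ => C - κ * s ^ H :=
    continuous_const.sub (continuous_const.mul (continuous_id.rpow_const fun _ => .inr hH.1.le))
  have hbdd : (fun s : ℝ => C - κ * s ^ H) =O[𝓝[>] 0] fun _ => (1 : ℝ) :=
    ((hcont.tendsto 0).isBigO_one ℝ).mono nhdsWithin_le_nhds
  have hI : (fun s => C + H * (H - 1) * κ * lagIntegral a b H s - (C - κ * s ^ H)) =O[𝓝[>] 0]
      fun s => s := by
    refine ((isBigO_lagIntegral_sub ha b hH).const_mul_left (H * (H - 1) * κ)).congr_left
      fun s => ?_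
    have := hH.1.ne'
    have := (sub_pos.2 hH.2).ne'
    field_simp
    ring
  refine (isBigO_exp_mul_mul_sub nhdsWithin_le_nhds (-b) hI
    (by simpa using (isBigO_refl (fun s : ℝ => s) _).mul hbdd)).congr_left fun s => ?_
  rw [lagCov]
  ring

end LagCov

theorem stmt7_general {α1 α2 ν1 ν2 H : ℝ} (hα1 : 0 ≤ α1) (hα2 : 0 ≤ α2)
    (hν1 : ν1 ≠ 0) (hν2 : ν2 ≠ 0) (hH : H ∈ Set.Ioo (0 : ℝ) 1) (ρ η C0 : ℝ) :
    (fun s => (lagCov α1 α2 H C0 (ν1 * ν2 * ((ρ - η) / 2)) s -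
        lagCov α2 α1 H C0 (ν1 * ν2 * ((ρ + η) / 2)) s) / (ν1 * ν2 * s ^ H) - η)
      =O[𝓝[>] 0] fun s => s ^ (1 - H) := by
  have h12 := isBigO_lagCov_sub hα1 α2 hH C0 (ν1 * ν2 * ((ρ - η) / 2))
  have h21 := isBigO_lagCov_sub hα2 α1 hH C0 (ν1 * ν2 * ((ρ + η) / 2))
  have hquot := ((h12.sub h21).const_mul_left (ν1 * ν2)⁻¹).mul
    (isBigO_refl (fun s : ℝ => (s ^ H)⁻¹) (𝓝[>] 0))
  refine hquot.congr' ?_ ?_ <;> filter_upwards [self_mem_nhdsWithin] with s (hs : 0 < s)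
  · have := (rpow_pos_of_pos hs H).ne'
    field_simp
    ring
  · rw [rpow_sub hs, rpow_one, div_eq_mul_inv]

/-- The `η`-formula of Lemma 3.12: for `H ∈ (0,1)`, as `s → 0⁺`,
`(r₁₂(s) - r₂₁(s)) / (ν₁ν₂ s^H) = η + O(s^{1-H})`. -/
theorem stmt7
    (α1 α2 ν1 ν2 H ρ η : ℝ)
    (hα1 : 0 < α1) (hα2 : 0 < α2) (hν1 : 0 < ν1) (hν2 : 0 < ν2)
    (hH : H ∈ Set.Ioo (0:ℝ) 1)
    (C0 : ℝ)
    (hC0 : C0 = Real.Gamma (H + 1) * ν1 * ν2 / (2 * (α1 + α2)) *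
      ((α1 ^ (1 - H) + α2 ^ (1 - H)) * ρ + (α2 ^ (1 - H) - α1 ^ (1 - H)) * η))
    (I12 I21 : ℝ → ℝ)
    (hI12 : ∀ s, I12 s =
      ∫ v in (0:ℝ)..s, Real.exp (α2 * v) *
        ∫ u in Set.Iic (0:ℝ), Real.exp (α1 * u) * (v - u) ^ (H - 2))
    (hI21 : ∀ s, I21 s =
      ∫ v in (0:ℝ)..s, Real.exp (α1 * v) *
        ∫ u in Set.Iic (0:ℝ), Real.exp (α2 * u) * (v - u) ^ (H - 2))
    (r12 r21 : ℝ → ℝ)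
    (hr12 : ∀ s, r12 s = Real.exp (-α2 * s) * C0 +
      ν1 * ν2 * Real.exp (-α2 * s) * (H * (H - 1)) * ((ρ - η) / 2) * I12 s)
    (hr21 : ∀ s, r21 s = Real.exp (-α1 * s) * C0 +
      ν1 * ν2 * Real.exp (-α1 * s) * (H * (H - 1)) * ((ρ + η) / 2) * I21 s) :
    (fun s : ℝ => (r12 s - r21 s) / (ν1 * ν2 * s ^ H) - η)
      =O[𝓝[>] (0:ℝ)] fun s : ℝ => s ^ (1 - H) := by
  refine (stmt7_general hα1.le hα2.le hν1.ne' hν2.ne' hH ρ η C0).congr_left fun s => ?_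
  simp only [hr12, hr21, hI12, hI21, lagCov, lagIntegral, pastKernel]
  ring
end

section
/- Let $H_1,H_2\in(0,1)$ with $H:=H_1+H_2<3/2$. Let $\gamma_{11},\gamma_{22},\gamma_{12},\gamma_{21}:\mathbb{Z}\to\mathbb{R}$ satisfy: (i) $|\gamma_{ij}(k)|\le\gamma_{ij}(0)$ for all $k\in\mathbb{Z}$ and all $i,j\in\{1,2\}$; (ii) there exist constants $\ell_{ij}>0$ such that $\lim_{|k|\to\infty}|\gamma_{ii}(k)|/|k|^{2H_i-2}=\ell_{ii}$ for $i=1,2$ and $\lim_{|k|\to\infty}|\gamma_{ij}(k)|/|k|^{H-2}=\ell_{ij}$ for $i\neq j$. Let $F(k_1,k_2,k_3,k_4)$ be any one of the four functions $\gamma_{11}(k_1-k_2)\gamma_{22}(k_2-k_3)\gamma_{11}(k_3-k_4)\gamma_{22}(k_4-k_1)$, $\gamma_{12}(k_1-k_2)\gamma_{12}(k_2-k_3)\gamma_{12}(k_3-k_4)\gamma_{12}(k_4-k_1)$, $\gamma_{12}(k_1-k_2)\gamma_{12}(k_2-k_3)\gamma_{11}(k_3-k_4)\gamma_{22}(k_4-k_1)$,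 or $\gamma_{12}(k_1-k_2)\gamma_{11}(k_2-k_3)\gamma_{21}(k_3-k_4)\gamma_{22}(k_4-k_1)$. Then $\frac{1}{n^{2}}\sum_{k_1,k_2,k_3,k_4=0}^{n-1}F(k_1,k_2,k_3,k_4)\longrightarrow 0$ as $n\to\infty$. -/
open MeasureTheory Filter Asymptotics Topology Real

/-!
Every factor is bounded by a weight `(1 + |k|) ^ (-a)`. A sum over a cycle with one edge removed is
a sum over a path, and is at most the number of starting points times the product of the row sums
`O(n ^ (1 - a))` of the remaining edges. To remove an edge, note that the differences along the
longest edge of the cycle dominate all others, so its exponent may be shifted to the other edges at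
no cost; when the exponents `a j < 1` of an `(m + 1)`-cycle add up to less than `m`, this can be
done while keeping all of them below `1`. The cyclic sum is therefore `O(n ^ (m + 1 - ∑ j, a j))`.
For the four products at hand `∑ j, min (a j) 1 > 2`, which gives `o(n ^ 2)`.
-/

lemma mul_rpow_neg_le_rpow_sub_rpow {x s : ℝ} (hx : 0 ≤ x) (hs0 : 0 ≤ s) (hs1 : s ≤ 1) :
    (1 - s) * (1 + x) ^ (-s) ≤ (1 + x) ^ (1 - s) - x ^ (1 - s) := by
  have hx1 : 0 < 1 + x := by linarith
  have hinv : (1 + x)⁻¹ ≤ 1 := inv_le_one_of_one_le₀ (by linarith)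
  have bernoulli : (1 + -(1 + x)⁻¹) ^ (1 - s) ≤ 1 + (1 - s) * -(1 + x)⁻¹ :=
    rpow_one_add_le_one_add_mul_self (by linarith) (by linarith) (by linarith)
  have hpow : (1 + x) ^ (-s) = (1 + x) ^ (1 - s) * (1 + x)⁻¹ := by
    rw [show -s = (1 - s) - 1 by ring, rpow_sub_one hx1.ne', div_eq_mul_inv]
  have hfactor : x ^ (1 - s) = (1 + x) ^ (1 - s) * (1 + -(1 + x)⁻¹) ^ (1 - s) := by
    rw [← mul_rpow hx1.le (by linarith)]
    congr 1
    field_simp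
    ring
  rw [hpow, hfactor]
  linarith [mul_le_mul_of_nonneg_left bernoulli (rpow_nonneg hx1.le (1 - s))]

lemma sum_range_one_add_rpow_neg_le {s : ℝ} (hs0 : 0 ≤ s) (hs1 : s < 1) (n : ℕ) :
    ∑ j ∈ Finset.range n, (1 + (j : ℝ)) ^ (-s) ≤ (n : ℝ) ^ (1 - s) / (1 - s) := by
  have hs : 0 < 1 - s := sub_pos.2 hs1
  rw [le_div_iff₀' hs]
  induction n with
  | zero => simp [zero_rpow hs.ne']
  | succ n ih =>
    have hstep := mul_rpow_neg_le_rpow_sub_rpow n.cast_nonneg hs0 hs1.le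
    rw [Finset.sum_range_succ, mul_add, Nat.cast_succ, add_comm (n : ℝ) 1]
    linarith

lemma sum_natAbs_sub_le_two_mul_sum {g : ℕ → ℝ} (hg : ∀ j, 0 ≤ g j) {n : ℕ} (i : Fin n) :
    ∑ k : Fin n, g ((i : ℤ) - k).natAbs ≤ 2 * ∑ j ∈ Finset.range n, g j := by
  have sum_le_of_injOn (S : Finset (Fin n))
      (hinj : Set.InjOn (fun k : Fin n => ((i : ℤ) - k).natAbs) S) :
      ∑ k ∈ S, g ((i : ℤ) - k).natAbs ≤ ∑ j ∈ Finset.range n, g j := by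
    rw [← Finset.sum_image (f := g) hinj]
    refine Finset.sum_le_sum_of_subset_of_nonneg ?_ fun j _ _ => hg j
    simp only [Finset.image_subset_iff, Finset.mem_range]
    omega
  rw [← Finset.sum_filter_add_sum_filter_not Finset.univ (· ≤ i), two_mul]
  refine add_le_add (sum_le_of_injOn _ ?_) (sum_le_of_injOn _ ?_) <;>
  · intro x hx y hy hxy
    simp only [Finset.coe_filter, Finset.mem_univ, true_and, Set.mem_ofPred_eq] at hx hy hxy
    omega

lemma rpow_natCast_isLittleO_of_lt {p q : ℝ} (hpq : p < q) :
    (fun n : ℕ => (n : ℝ) ^ p) =o[atTop] fun n => (n : ℝ) ^ q := by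
  have hlim : Tendsto (fun n : ℕ => (n : ℝ) ^ (-(q - p))) atTop (𝓝 0) :=
    (tendsto_rpow_neg_atTop (sub_pos.2 hpq)).comp tendsto_natCast_atTop_atTop
  refine isLittleO_of_tendsto' ?_ (hlim.congr' ?_)
  all_goals
    filter_upwards [eventually_gt_atTop 0] with n hn
    have hn0 : (0 : ℝ) < n := Nat.cast_pos.2 hn
  · exact fun h => absurd h (rpow_pos_of_pos hn0 q).ne'
  · rw [← rpow_sub hn0, neg_sub]

/-- The model function `(1 + |k|) ^ (-a)` for polynomial decay at rate `a`. The shift by `1` makes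
it positive at `k = 0`, where `|k| ^ (-a)` takes the junk value `0` unless `a = 0`. -/
noncomputable def decayWeight (a : ℝ) (k : ℤ) : ℝ := (1 + |(k : ℝ)|) ^ (-a)

lemma decayWeight_pos (a : ℝ) (k : ℤ) : 0 < decayWeight a k := by
  unfold decayWeight
  positivity

lemma decayWeight_zero (k : ℤ) : decayWeight 0 k = 1 := by
  simp [decayWeight]

lemma decayWeight_anti {a b : ℝ} (hab : a ≤ b) (k : ℤ) : decayWeight b k ≤ decayWeight a k :=
  rpow_le_rpow_of_exponent_le (by linarith [abs_nonneg (k : ℝ)]) (neg_le_neg hab)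

lemma abs_rpow_neg_isBigO_decayWeight {a : ℝ} (ha : 0 ≤ a) :
    (fun k : ℤ => |(k : ℝ)| ^ (-a)) =O[cofinite] decayWeight a := by
  refine IsBigO.of_bound (2 ^ a) ?_
  filter_upwards [(Set.finite_singleton (0 : ℤ)).compl_mem_cofinite] with k hk
  have hk1 : (1 : ℝ) ≤ |(k : ℝ)| := by exact_mod_cast Int.one_le_abs hk
  rw [norm_eq_abs, norm_eq_abs, abs_of_pos (by positivity), abs_of_pos (decayWeight_pos a k)]
  calc |(k : ℝ)| ^ (-a) ≤ ((1 + |(k : ℝ)|) / 2) ^ (-a) :=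
        rpow_le_rpow_of_nonpos (by positivity) (by linarith) (neg_nonpos.2 ha)
    _ = 2 ^ a * decayWeight a k := by
        rw [div_rpow (by positivity) zero_le_two, rpow_neg zero_le_two, div_inv_eq_mul, mul_comm,
          decayWeight]

lemma exists_abs_le_mul_decayWeight {a : ℝ} (ha : 0 ≤ a) {f : ℤ → ℝ}
    (hf : f =O[cofinite] fun k : ℤ => |(k : ℝ)| ^ (-a)) :
    ∃ C > 0, ∀ k, |f k| ≤ C * decayWeight a k := by
  obtain ⟨C, hC0, hC⟩ := bound_of_isBigO_cofinite (hf.trans (abs_rpow_neg_isBigO_decayWeight ha))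
  refine ⟨C, hC0, fun k => ?_⟩
  simpa only [norm_eq_abs, abs_of_pos (decayWeight_pos a k)] using hC (decayWeight_pos a k).ne'

lemma sum_decayWeight_sub_le {a : ℝ} (ha0 : 0 ≤ a) (ha1 : a < 1) {n : ℕ} (i : Fin n) :
    ∑ k : Fin n, decayWeight a ((i : ℤ) - k) ≤ 2 / (1 - a) * (n : ℝ) ^ (1 - a) := by
  have hnatAbs (k : ℤ) : decayWeight a k = (1 + (k.natAbs : ℝ)) ^ (-a) := by
    rw [decayWeight, Nat.cast_natAbs, Int.cast_abs]
  calc ∑ k : Fin n, decayWeight a ((i : ℤ) - k)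
      ≤ 2 * ∑ j ∈ Finset.range n, (1 + (j : ℝ)) ^ (-a) := by
        simp only [hnatAbs]
        exact sum_natAbs_sub_le_two_mul_sum (g := fun j => (1 + (j : ℝ)) ^ (-a))
          (fun j => by positivity) i
    _ ≤ 2 * ((n : ℝ) ^ (1 - a) / (1 - a)) := by
        gcongr
        exact sum_range_one_add_rpow_neg_le ha0 ha1 n
    _ = 2 / (1 - a) * (n : ℝ) ^ (1 - a) := by ring

section ExponentShift

variable {ι : Type*} [Fintype ι]

lemma exists_exponent_shift {a : ι → ℝ} (ha0 : ∀ j, 0 ≤ a j) (ha1 : ∀ j, a j < 1)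
    (hsum : ∑ j, a j + 1 < Fintype.card ι) (i : ι) :
    ∃ b : ι → ℝ, b i = 0 ∧ (∀ j, 0 ≤ b j) ∧ (∀ j, b j < 1) ∧ (∀ j ≠ i, a j ≤ b j) ∧
      ∑ j, b j = ∑ j, a j := by
  classical
  -- The capacity that the edges other than `i` have left below `1`.
  set D := ∑ j ∈ Finset.univ.erase i, (1 - a j) with hD
  have hsplit : ∑ j ∈ Finset.univ.erase i, a j + a i = ∑ j, a j :=
    Finset.sum_erase_add _ _ (Finset.mem_univ i)
  have haD : a i < D := by
    have hcard : ∑ _j ∈ Finset.univ.erase i, (1 : ℝ) + 1 = Fintype.card ι := by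
      rw [Finset.sum_erase_add _ _ (Finset.mem_univ i), Finset.sum_const, nsmul_one,
        Finset.card_univ]
    rw [hD, Finset.sum_sub_distrib]
    linarith
  have hD0 : 0 < D := (ha0 i).trans_lt haD
  have ht0 : 0 ≤ a i / D := div_nonneg (ha0 i) hD0.le
  have ht1 : a i / D < 1 := (div_lt_one hD0).2 haD
  have hge (j : ι) : a j ≤ a j + a i / D * (1 - a j) :=
    le_add_of_nonneg_right (mul_nonneg ht0 (sub_nonneg.2 (ha1 j).le))
  refine ⟨fun j => if j = i then 0 else a j + a i / D * (1 - a j), if_pos rfl, fun j => ?_,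
    fun j => ?_, fun j hj => (hge j).trans_eq (if_neg hj).symm, ?_⟩
  · dsimp only
    split_ifs
    exacts [le_rfl, (ha0 j).trans (hge j)]
  · dsimp only
    split_ifs
    exacts [one_pos, by linarith [mul_lt_of_lt_one_left (sub_pos.2 (ha1 j)) ht1]]
  · rw [← Finset.sum_erase_add _ _ (Finset.mem_univ i), if_pos rfl, add_zero,
      Finset.sum_congr rfl fun j hj => if_neg (Finset.ne_of_mem_erase hj),
      Finset.sum_add_distrib, ← Finset.mul_sum, ← hD, div_mul_cancel₀ _ hD0.ne', hsplit]

lemma prod_rpow_neg_le_prod_rpow_neg {a b u : ι → ℝ} {i : ι} (hu : ∀ j, 0 < u j)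
    (hmax : ∀ j, u j ≤ u i) (hab : ∀ j ≠ i, a j ≤ b j) (hsum : ∑ j, b j = ∑ j, a j) :
    ∏ j, u j ^ (-a j) ≤ ∏ j, u j ^ (-b j) := by
  have hratio : ∏ j, u j ^ (b j - a j) ≤ 1 :=
    calc ∏ j, u j ^ (b j - a j) ≤ ∏ j, u i ^ (b j - a j) := by
          refine Finset.prod_le_prod (fun j _ => rpow_nonneg (hu j).le _) fun j _ => ?_
          rcases eq_or_ne j i with rfl | hj
          · exact le_rfl
          · exact rpow_le_rpow (hu j).le (hmax j) (sub_nonneg.2 (hab j hj))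
      _ = 1 := by
          rw [← rpow_sum_of_pos (hu i), Finset.sum_sub_distrib, hsum, sub_self, rpow_zero]
  calc ∏ j, u j ^ (-a j) = (∏ j, u j ^ (-b j)) * ∏ j, u j ^ (b j - a j) := by
        rw [← Finset.prod_mul_distrib]
        refine Finset.prod_congr rfl fun j _ => ?_
        rw [← rpow_add (hu j)]
        ring_nf
    _ ≤ ∏ j, u j ^ (-b j) :=
        mul_le_of_le_one_right (Finset.prod_nonneg fun j _ => rpow_nonneg (hu j).le _) hratio

lemma prod_decayWeight_le_sum [Nonempty ι] {a : ι → ℝ} {b : ι → ι → ℝ}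
    (hab : ∀ i, ∀ j ≠ i, a j ≤ b i j) (hsum : ∀ i, ∑ j, b i j = ∑ j, a j) (x : ι → ℤ) :
    ∏ j, decayWeight (a j) (x j) ≤ ∑ i, ∏ j, decayWeight (b i j) (x j) := by
  obtain ⟨i, hi⟩ := Finite.exists_max fun j => 1 + |(x j : ℝ)|
  calc ∏ j, decayWeight (a j) (x j)
      ≤ ∏ j, decayWeight (b i j) (x j) :=
        prod_rpow_neg_le_prod_rpow_neg (fun j => by positivity) hi (hab i) (hsum i)
    _ ≤ ∑ i, ∏ j, decayWeight (b i j) (x j) :=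
        Finset.single_le_sum (f := fun i => ∏ j, decayWeight (b i j) (x j))
          (fun i _ => Finset.prod_nonneg fun j _ => (decayWeight_pos _ _).le) (Finset.mem_univ i)

end ExponentShift

section CyclicSums

lemma sum_path_prod_le {ι : Type*} [Fintype ι] {m : ℕ} {K : Fin m → ι → ι → ℝ} {M : Fin m → ℝ}
    (hK : ∀ j x y, 0 ≤ K j x y) (hM : ∀ j x, ∑ y, K j x y ≤ M j) :
    ∑ k : Fin (m + 1) → ι, ∏ j, K j (k j.castSucc) (k j.succ) ≤ Fintype.card ι * ∏ j, M j := by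
  cases isEmpty_or_nonempty ι with
  | inl _ => simp
  | inr hι =>
    have hM0 (j : Fin m) : 0 ≤ M j :=
      (Finset.sum_nonneg fun y _ => hK j _ y).trans (hM j hι.some)
    induction m with
    | zero => simp
    | succ m ih =>
      rw [← (Fin.snocEquiv fun _ => ι).sum_comp, Fintype.sum_prod_type_right]
      calc _ = ∑ k : Fin (m + 1) → ι, (∏ j : Fin m, K j.castSucc (k j.castSucc) (k j.succ)) *
              ∑ y, K (Fin.last m) (k (Fin.last m)) y := by
            simp only [Fin.prod_univ_castSucc, Fin.snocEquiv, Equiv.coe_fn_mk, Fin.snoc_castSucc,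
              Fin.succ_castSucc, Fin.succ_last, Fin.snoc_last, Finset.mul_sum]
        _ ≤ ∑ k : Fin (m + 1) → ι, (∏ j : Fin m, K j.castSucc (k j.castSucc) (k j.succ)) *
              M (Fin.last m) :=
            Finset.sum_le_sum fun k _ => mul_le_mul_of_nonneg_left (hM _ _)
              (Finset.prod_nonneg fun j _ => hK _ _ _)
        _ ≤ (Fintype.card ι * ∏ j : Fin m, M j.castSucc) * M (Fin.last m) := by
            rw [← Finset.sum_mul]
            exact mul_le_mul_of_nonneg_right (ih (fun j => hK j.castSucc)
              (fun j => hM j.castSucc) fun j => hM0 j.castSucc) (hM0 _)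
        _ = _ := by rw [Fin.prod_univ_castSucc, mul_assoc]

variable {m : ℕ}

/-- The sum of `∏ j, f j (k j - k (j + 1))` over all `k : Fin (m + 1) → {0, …, n - 1}`, where
`j + 1` is taken modulo `m + 1`. -/
def cyclicSum (n : ℕ) (f : Fin (m + 1) → ℤ → ℝ) : ℝ :=
  ∑ k : Fin (m + 1) → Fin n, ∏ j, f j ((k j : ℤ) - k (j + 1))

lemma cyclicSum_rotate (n : ℕ) (f : Fin (m + 1) → ℤ → ℝ) (c : Fin (m + 1)) :
    cyclicSum n (fun j => f (j + c)) = cyclicSum n f := by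
  refine (Fintype.sum_equiv ((Equiv.addRight c).symm.arrowCongr (Equiv.refl (Fin n))) _ _
    fun k => ?_).symm
  rw [← Equiv.prod_comp (Equiv.addRight c)]
  refine Finset.prod_congr rfl fun j _ => ?_
  simp [add_right_comm]

lemma cyclicSum_four (n : ℕ) (f₁ f₂ f₃ f₄ : ℤ → ℝ) :
    cyclicSum n ![f₁, f₂, f₃, f₄] =
      ∑ k₁ ∈ Finset.range n, ∑ k₂ ∈ Finset.range n, ∑ k₃ ∈ Finset.range n, ∑ k₄ ∈ Finset.range n,
        f₁ ((k₁ : ℤ) - k₂) * f₂ ((k₂ : ℤ) - k₃) * f₃ ((k₃ : ℤ) - k₄) * f₄ ((k₄ : ℤ) - k₁) := by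
  simp only [cyclicSum, ← (Fin.consEquiv fun _ => Fin n).sum_comp, Fintype.sum_prod_type,
    Finset.sum_range, Fintype.sum_unique]
  exact Finset.sum_congr rfl fun k₁ _ => Finset.sum_congr rfl fun k₂ _ =>
    Finset.sum_congr rfl fun k₃ _ => Finset.sum_congr rfl fun k₄ _ => Fin.prod_univ_four _

lemma abs_cyclicSum_le (n : ℕ) {f g : Fin (m + 1) → ℤ → ℝ} {C : Fin (m + 1) → ℝ}
    (hfg : ∀ j k, |f j k| ≤ C j * g j k) : |cyclicSum n f| ≤ (∏ j, C j) * cyclicSum n g := by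
  rw [cyclicSum, cyclicSum, Finset.mul_sum]
  refine (Finset.abs_sum_le_sum_abs _ _).trans (Finset.sum_le_sum fun k _ => ?_)
  rw [Finset.abs_prod, ← Finset.prod_mul_distrib]
  exact Finset.prod_le_prod (fun j _ => abs_nonneg _) fun j _ => hfg j _

lemma cyclicSum_decayWeight_nonneg (n : ℕ) (a : Fin (m + 1) → ℝ) :
    0 ≤ cyclicSum n fun j => decayWeight (a j) :=
  Finset.sum_nonneg fun _ _ => Finset.prod_nonneg fun _ _ => (decayWeight_pos _ _).le

lemma cyclicSum_decayWeight_le_of_last_eq_zero {b : Fin (m + 1) → ℝ} (hb0 : ∀ j, 0 ≤ b j)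
    (hb1 : ∀ j, b j < 1) (hlast : b (Fin.last m) = 0) {n : ℕ} (hn : 0 < n) :
    cyclicSum n (fun j => decayWeight (b j)) ≤
      (∏ j : Fin m, 2 / (1 - b j.castSucc)) * (n : ℝ) ^ (m + 1 - ∑ j, b j) := by
  have hn0 : (0 : ℝ) < n := Nat.cast_pos.2 hn
  calc cyclicSum n (fun j => decayWeight (b j))
      = ∑ k : Fin (m + 1) → Fin n,
          ∏ j : Fin m, decayWeight (b j.castSucc) ((k j.castSucc : ℤ) - k j.succ) := by
        simp only [cyclicSum, Fin.prod_univ_castSucc, hlast, decayWeight_zero, mul_one,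
          Fin.coeSucc_eq_succ]
    _ ≤ Fintype.card (Fin n) *
          ∏ j : Fin m, (2 / (1 - b j.castSucc) * (n : ℝ) ^ (1 - b j.castSucc)) :=
        sum_path_prod_le
          (K := fun (j : Fin m) (x y : Fin n) => decayWeight (b j.castSucc) ((x : ℤ) - y))
          (fun _ _ _ => (decayWeight_pos _ _).le)
          fun j x => sum_decayWeight_sub_le (hb0 j.castSucc) (hb1 j.castSucc) x
    _ = (∏ j : Fin m, 2 / (1 - b j.castSucc)) *
          ((n : ℝ) ^ (1 : ℝ) * (n : ℝ) ^ ∑ j : Fin m, (1 - b j.castSucc)) := by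
        rw [Finset.prod_mul_distrib, ← rpow_sum_of_pos hn0, Fintype.card_fin, rpow_one]
        ring
    _ = _ := by
        rw [← rpow_add hn0, Fin.sum_univ_castSucc, hlast, Finset.sum_sub_distrib, Finset.sum_const,
          nsmul_one, Finset.card_univ, Fintype.card_fin]
        ring_nf

lemma cyclicSum_decayWeight_isBigO_of_eq_zero {b : Fin (m + 1) → ℝ} (hb0 : ∀ j, 0 ≤ b j)
    (hb1 : ∀ j, b j < 1) {i : Fin (m + 1)} (hi : b i = 0) :
    (fun n : ℕ => cyclicSum n fun j => decayWeight (b j)) =O[atTop]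
      fun n => (n : ℝ) ^ (m + 1 - ∑ j, b j) := by
  set c : Fin (m + 1) → ℝ := fun j => b (j + (i + 1))
  have hlast : c (Fin.last m) = 0 := by
    simp only [c, add_left_comm _ i, Fin.last_add_one, add_zero, hi]
  have hsum : ∑ j, c j = ∑ j, b j := Equiv.sum_comp (Equiv.addRight (i + 1)) b
  refine IsBigO.of_bound (∏ j : Fin m, 2 / (1 - c j.castSucc)) ?_
  filter_upwards [eventually_gt_atTop 0] with n hn
  rw [norm_of_nonneg (cyclicSum_decayWeight_nonneg n b), norm_of_nonneg (by positivity), ← hsum,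
    ← cyclicSum_rotate n _ (i + 1)]
  exact cyclicSum_decayWeight_le_of_last_eq_zero (b := c) (fun j => hb0 _) (fun j => hb1 _) hlast hn

lemma cyclicSum_decayWeight_isBigO {a : Fin (m + 1) → ℝ} (ha0 : ∀ j, 0 ≤ a j)
    (ha1 : ∀ j, a j < 1) (hsum : ∑ j, a j < m) :
    (fun n : ℕ => cyclicSum n fun j => decayWeight (a j)) =O[atTop]
      fun n => (n : ℝ) ^ (m + 1 - ∑ j, a j) := by
  choose b hbi hb0 hb1 hab hbsum using exists_exponent_shift ha0 ha1 (by simpa using hsum)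
  have hle (n : ℕ) : cyclicSum n (fun j => decayWeight (a j)) ≤
      ∑ i, cyclicSum n fun j => decayWeight (b i j) := by
    simp only [cyclicSum]
    rw [Finset.sum_comm]
    exact Finset.sum_le_sum fun k _ => prod_decayWeight_le_sum hab hbsum _
  have hshifted : (fun n : ℕ => ∑ i, cyclicSum n fun j => decayWeight (b i j)) =O[atTop]
      fun n => (n : ℝ) ^ (m + 1 - ∑ j, a j) :=
    IsBigO.fun_sum fun i _ =>
      hbsum i ▸ cyclicSum_decayWeight_isBigO_of_eq_zero (hb0 i) (hb1 i) (hbi i)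
  refine (IsBigO.of_norm_le fun n => ?_).trans hshifted
  rw [norm_of_nonneg (cyclicSum_decayWeight_nonneg n a)]
  exact hle n

theorem cyclicSum_isLittleO {f : Fin (m + 1) → ℤ → ℝ} {a : Fin (m + 1) → ℝ} {s : ℝ}
    (hf : ∀ j, f j =O[cofinite] fun k : ℤ => |(k : ℝ)| ^ (-a j)) (ha0 : ∀ j, 0 ≤ a j)
    (hs0 : 0 ≤ s) (hsm : s < m) (hs : s < ∑ j, min (a j) 1) :
    (fun n : ℕ => cyclicSum n f) =o[atTop] fun n => (n : ℝ) ^ (m + 1 - s) := by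
  set S := ∑ j, min (a j) 1
  have hS : 0 < S := hs0.trans_lt hs
  -- Scaling the exponents `min (a j) 1` by `t` brings each below `1` and their sum below `m`.
  obtain ⟨t, hst, ht⟩ : ∃ t, s / S < t ∧ t < min 1 (m / S) :=
    exists_between (lt_min ((div_lt_one hS).2 hs) (div_lt_div_of_pos_right hsm hS))
  obtain ⟨ht1, htm⟩ := lt_min_iff.1 ht
  have ht0 : 0 ≤ t := (div_nonneg hs0 hS.le).trans hst.le
  have hmin0 (j) : 0 ≤ min (a j) 1 := le_min (ha0 j) zero_le_one
  have hsum : ∑ j, t * min (a j) 1 = t * S := (Finset.mul_sum _ _ _).symm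
  have hweights := cyclicSum_decayWeight_isBigO (fun j => mul_nonneg ht0 (hmin0 j))
    (fun j => mul_lt_one_of_nonneg_of_lt_one_left ht0 ht1 (min_le_right (a j) 1))
    (hsum ▸ (lt_div_iff₀ hS).1 htm)
  choose C hC0 hC using fun j => exists_abs_le_mul_decayWeight (ha0 j) (hf j)
  have hfw (j k) : |f j k| ≤ C j * decayWeight (t * min (a j) 1) k :=
    (hC j k).trans (mul_le_mul_of_nonneg_left (decayWeight_anti
      ((mul_le_of_le_one_left (hmin0 j) ht1.le).trans (min_le_left _ _)) k) (hC0 j).le)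
  have hbound : (fun n : ℕ => cyclicSum n f) =O[atTop]
      fun n => cyclicSum n fun j => decayWeight (t * min (a j) 1) :=
    IsBigO.of_bound (∏ j, C j) (Eventually.of_forall fun n => by
      rw [norm_of_nonneg (cyclicSum_decayWeight_nonneg n _)]
      exact abs_cyclicSum_le n hfw)
  refine (hbound.trans hweights).trans_isLittleO (rpow_natCast_isLittleO_of_lt ?_)
  rw [hsum]
  linarith [(div_lt_iff₀ hS).1 hst]

end CyclicSums

lemma isBigO_abs_rpow_of_tendsto_div {f : ℤ → ℝ} {e ℓ : ℝ}
    (hlim : Tendsto (fun k : ℤ => |f k| / |(k : ℝ)| ^ e) (cocompact ℤ) (𝓝 ℓ)) :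
    f =O[cofinite] fun k : ℤ => |(k : ℝ)| ^ e := by
  rw [cocompact_eq_cofinite] at hlim
  refine IsBigO.of_norm_left (isBigO_of_div_tendsto_nhds ?_ ℓ hlim)
  filter_upwards [(Set.finite_singleton (0 : ℤ)).compl_mem_cofinite] with k hk hzero
  exact absurd hzero (rpow_pos_of_pos (abs_pos.2 (Int.cast_ne_zero.2 hk)) e).ne'

lemma tendsto_cyclicSum_four {f₁ f₂ f₃ f₄ : ℤ → ℝ} {a₁ a₂ a₃ a₄ : ℝ}
    (hf₁ : f₁ =O[cofinite] fun k : ℤ => |(k : ℝ)| ^ (-a₁))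
    (hf₂ : f₂ =O[cofinite] fun k : ℤ => |(k : ℝ)| ^ (-a₂))
    (hf₃ : f₃ =O[cofinite] fun k : ℤ => |(k : ℝ)| ^ (-a₃))
    (hf₄ : f₄ =O[cofinite] fun k : ℤ => |(k : ℝ)| ^ (-a₄))
    (h₁ : 0 ≤ a₁) (h₂ : 0 ≤ a₂) (h₃ : 0 ≤ a₃) (h₄ : 0 ≤ a₄)
    (hsum : 2 < min a₁ 1 + min a₂ 1 + min a₃ 1 + min a₄ 1) :
    Tendsto (fun n : ℕ => (1 / (n : ℝ) ^ 2) *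
      ∑ k₁ ∈ Finset.range n, ∑ k₂ ∈ Finset.range n, ∑ k₃ ∈ Finset.range n, ∑ k₄ ∈ Finset.range n,
        f₁ ((k₁ : ℤ) - k₂) * f₂ ((k₂ : ℤ) - k₃) * f₃ ((k₃ : ℤ) - k₄) * f₄ ((k₄ : ℤ) - k₁))
      atTop (𝓝 0) := by
  have hlittle := cyclicSum_isLittleO (f := ![f₁, f₂, f₃, f₄]) (a := ![a₁, a₂, a₃, a₄]) (s := 2)
    (Fin.forall_fin_succ.2 ⟨hf₁, Fin.forall_fin_succ.2 ⟨hf₂, Fin.forall_fin_two.2 ⟨hf₃, hf₄⟩⟩⟩)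
    (by simp [Fin.forall_fin_succ, h₁, h₂, h₃, h₄]) zero_le_two (by norm_num)
    (by simpa [Fin.sum_univ_four] using hsum)
  refine hlittle.tendsto_div_nhds_zero.congr fun n => ?_
  rw [cyclicSum_four, div_eq_inv_mul, one_div]
  norm_num

lemma one_lt_min_add_min {a b : ℝ} (ha : 0 < a) (hb : 0 < b) (hab : 1 < a + b) :
    1 < min a 1 + min b 1 := by
  rcases min_cases a 1 with h | h <;> rcases min_cases b 1 with h' | h' <;> linarith

theorem stmt11_general {H1 H2 : ℝ} (h1 : H1 < 1) (h2 : H2 < 1) (hH : H1 + H2 < 3 / 2)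
    {γ11 γ22 γ12 γ21 : ℤ → ℝ}
    (h11 : γ11 =O[cofinite] fun k : ℤ => |(k : ℝ)| ^ (2 * H1 - 2))
    (h22 : γ22 =O[cofinite] fun k : ℤ => |(k : ℝ)| ^ (2 * H2 - 2))
    (h12 : γ12 =O[cofinite] fun k : ℤ => |(k : ℝ)| ^ (H1 + H2 - 2))
    (h21 : γ21 =O[cofinite] fun k : ℤ => |(k : ℝ)| ^ (H1 + H2 - 2)) :
    Tendsto (fun n : ℕ => (1 / (n : ℝ) ^ 2) *
        ∑ k1 ∈ Finset.range n, ∑ k2 ∈ Finset.range n,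
          ∑ k3 ∈ Finset.range n, ∑ k4 ∈ Finset.range n,
            γ11 ((k1 : ℤ) - k2) * γ22 ((k2 : ℤ) - k3) *
              γ11 ((k3 : ℤ) - k4) * γ22 ((k4 : ℤ) - k1)) atTop (𝓝 0) ∧
    Tendsto (fun n : ℕ => (1 / (n : ℝ) ^ 2) *
        ∑ k1 ∈ Finset.range n, ∑ k2 ∈ Finset.range n,
          ∑ k3 ∈ Finset.range n, ∑ k4 ∈ Finset.range n,
            γ12 ((k1 : ℤ) - k2) * γ12 ((k2 : ℤ) - k3) *
              γ12 ((k3 : ℤ) - k4) * γ12 ((k4 : ℤ) - k1)) atTop (𝓝 0) ∧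
    Tendsto (fun n : ℕ => (1 / (n : ℝ) ^ 2) *
        ∑ k1 ∈ Finset.range n, ∑ k2 ∈ Finset.range n,
          ∑ k3 ∈ Finset.range n, ∑ k4 ∈ Finset.range n,
            γ12 ((k1 : ℤ) - k2) * γ12 ((k2 : ℤ) - k3) *
              γ11 ((k3 : ℤ) - k4) * γ22 ((k4 : ℤ) - k1)) atTop (𝓝 0) ∧
    Tendsto (fun n : ℕ => (1 / (n : ℝ) ^ 2) *
        ∑ k1 ∈ Finset.range n, ∑ k2 ∈ Finset.range n,
          ∑ k3 ∈ Finset.range n, ∑ k4 ∈ Finset.range n,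
            γ12 ((k1 : ℤ) - k2) * γ11 ((k2 : ℤ) - k3) *
              γ21 ((k3 : ℤ) - k4) * γ22 ((k4 : ℤ) - k1)) atTop (𝓝 0) := by
  rw [← neg_sub] at h11 h22 h12 h21
  have hdiag := one_lt_min_add_min (sub_pos.2 (by linarith : 2 * H1 < 2))
    (sub_pos.2 (by linarith : 2 * H2 < 2)) (by linarith)
  have hcross := one_lt_min_add_min (sub_pos.2 (by linarith : H1 + H2 < 2))
    (sub_pos.2 (by linarith : H1 + H2 < 2)) (by linarith)
  refine ⟨tendsto_cyclicSum_four h11 h22 h11 h22 ?_ ?_ ?_ ?_ ?_,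
    tendsto_cyclicSum_four h12 h12 h12 h12 ?_ ?_ ?_ ?_ ?_,
    tendsto_cyclicSum_four h12 h12 h11 h22 ?_ ?_ ?_ ?_ ?_,
    tendsto_cyclicSum_four h12 h11 h21 h22 ?_ ?_ ?_ ?_ ?_⟩ <;> linarith

/-- Lemma 3.6 of the paper: vanishing of normalized fourfold sums of products of
(cross-)covariance-like functions when `H = H₁ + H₂ < 3/2`. -/
theorem stmt11
    (H1 H2 : ℝ) (h1 : H1 ∈ Set.Ioo (0:ℝ) 1) (h2 : H2 ∈ Set.Ioo (0:ℝ) 1)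
    (hH : H1 + H2 < 3 / 2)
    (γ11 γ22 γ12 γ21 : ℤ → ℝ)
    (hb11 : ∀ k, |γ11 k| ≤ γ11 0) (hb22 : ∀ k, |γ22 k| ≤ γ22 0)
    (hb12 : ∀ k, |γ12 k| ≤ γ12 0) (hb21 : ∀ k, |γ21 k| ≤ γ21 0)
    (ℓ11 ℓ22 ℓ12 ℓ21 : ℝ)
    (hℓ11 : 0 < ℓ11) (hℓ22 : 0 < ℓ22) (hℓ12 : 0 < ℓ12) (hℓ21 : 0 < ℓ21)
    (hlim11 : Tendsto (fun k : ℤ => |γ11 k| / |(k : ℝ)| ^ (2 * H1 - 2))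
      (cocompact ℤ) (𝓝 ℓ11))
    (hlim22 : Tendsto (fun k : ℤ => |γ22 k| / |(k : ℝ)| ^ (2 * H2 - 2))
      (cocompact ℤ) (𝓝 ℓ22))
    (hlim12 : Tendsto (fun k : ℤ => |γ12 k| / |(k : ℝ)| ^ (H1 + H2 - 2))
      (cocompact ℤ) (𝓝 ℓ12))
    (hlim21 : Tendsto (fun k : ℤ => |γ21 k| / |(k : ℝ)| ^ (H1 + H2 - 2))
      (cocompact ℤ) (𝓝 ℓ21)) :
    Tendsto (fun n : ℕ => (1 / (n : ℝ) ^ 2) *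
        ∑ k1 ∈ Finset.range n, ∑ k2 ∈ Finset.range n,
          ∑ k3 ∈ Finset.range n, ∑ k4 ∈ Finset.range n,
            γ11 ((k1 : ℤ) - k2) * γ22 ((k2 : ℤ) - k3) *
              γ11 ((k3 : ℤ) - k4) * γ22 ((k4 : ℤ) - k1)) atTop (𝓝 0) ∧
    Tendsto (fun n : ℕ => (1 / (n : ℝ) ^ 2) *
        ∑ k1 ∈ Finset.range n, ∑ k2 ∈ Finset.range n,
          ∑ k3 ∈ Finset.range n, ∑ k4 ∈ Finset.range n,
            γ12 ((k1 : ℤ) - k2) * γ12 ((k2 : ℤ) - k3) *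
              γ12 ((k3 : ℤ) - k4) * γ12 ((k4 : ℤ) - k1)) atTop (𝓝 0) ∧
    Tendsto (fun n : ℕ => (1 / (n : ℝ) ^ 2) *
        ∑ k1 ∈ Finset.range n, ∑ k2 ∈ Finset.range n,
          ∑ k3 ∈ Finset.range n, ∑ k4 ∈ Finset.range n,
            γ12 ((k1 : ℤ) - k2) * γ12 ((k2 : ℤ) - k3) *
              γ11 ((k3 : ℤ) - k4) * γ22 ((k4 : ℤ) - k1)) atTop (𝓝 0) ∧
    Tendsto (fun n : ℕ => (1 / (n : ℝ) ^ 2) *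
        ∑ k1 ∈ Finset.range n, ∑ k2 ∈ Finset.range n,
          ∑ k3 ∈ Finset.range n, ∑ k4 ∈ Finset.range n,
            γ12 ((k1 : ℤ) - k2) * γ11 ((k2 : ℤ) - k3) *
              γ21 ((k3 : ℤ) - k4) * γ22 ((k4 : ℤ) - k1)) atTop (𝓝 0) := by
  exact stmt11_general h1.2 h2.2 hH (isBigO_abs_rpow_of_tendsto_div hlim11)
    (isBigO_abs_rpow_of_tendsto_div hlim22) (isBigO_abs_rpow_of_tendsto_div hlim12)
    (isBigO_abs_rpow_of_tendsto_div hlim21)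
end
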